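/- arXiv:1304.4354 — 4 statements merged into one kernel-verified Lean document; each statement's English description precedes it below -/
import Mathlib

section
/- Let r_0, r_1, ..., r_d be the orthogonal polynomial sequence for the discrete scalar product on a mesh of d+1 real points, normalized so that ‖r_i‖² = r_i(λ_0), and let s_i = r_0 + r_1 + ... + r_i be their sum polynomials. Then 1 = s_0(λ_0) < s_1(λ_0) < ... < s_d(λ_0) = 1/w_0, and s_d(λ_i) = 0 for every i ≠ 0. -/
open Polynomial Finset

/-- The discrete scalar product `⟨f,g⟩ = ∑_{i∈s} w i · f(λ i) · g(λ i)` on a mesh. -/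
def discInner (s : Finset ℕ) (lam w : ℕ → ℝ) (f g : Polynomial ℝ) : ℝ :=
  ∑ i ∈ s, w i * f.eval (lam i) * g.eval (lam i)

/-- A nonzero polynomial of degree less than the number of nodes has positive square norm. -/
lemma discInner_self_pos {s : Finset ℕ} {lam w : ℕ → ℝ} (hlam : Set.InjOn lam s)
    (hw : ∀ i ∈ s, 0 < w i) {f : Polynomial ℝ} (hf : f ≠ 0) (hdeg : f.degree < s.card) :
    0 < discInner s lam w f f := by
  have hterm : ∀ i ∈ s, 0 ≤ w i * f.eval (lam i) * f.eval (lam i) := fun i hi => by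
    rw [mul_assoc]
    exact mul_nonneg (hw i hi).le (mul_self_nonneg _)
  refine (Finset.sum_nonneg hterm).lt_of_ne' fun h => hf ?_
  refine eq_zero_of_degree_lt_of_eval_index_eq_zero s hlam hdeg fun i hi => ?_
  simpa [(hw i hi).ne'] using (Finset.sum_eq_zero_iff_of_nonneg hterm).1 h i hi

/-- Dual orthogonality: if `r 0, …, r d` are orthogonal for the discrete scalar product on `d + 1`
nodes and have nonzero square norms, then their values are orthogonal in the other index too. -/
lemma sum_eval_mul_eval_div_discInner {d : ℕ} {lam w : ℕ → ℝ} {r : ℕ → Polynomial ℝ}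
    (horth : ∀ i ≤ d, ∀ j ≤ d, i ≠ j → discInner (range (d + 1)) lam w (r i) (r j) = 0)
    (hne : ∀ i ≤ d, discInner (range (d + 1)) lam w (r i) (r i) ≠ 0)
    {a b : ℕ} (ha : a ≤ d) (hb : b ≤ d) :
    ∑ j ∈ range (d + 1), (r j).eval (lam a) *
      (w b * (r j).eval (lam b) / discInner (range (d + 1)) lam w (r j) (r j)) =
      if a = b then 1 else 0 := by
  let A : Matrix (Fin (d + 1)) (Fin (d + 1)) ℝ := .of fun j i =>
    w i * (r j).eval (lam i) / discInner (range (d + 1)) lam w (r j) (r j)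
  let B : Matrix (Fin (d + 1)) (Fin (d + 1)) ℝ := .of fun i j => (r j).eval (lam i)
  have hAB : A * B = 1 := by
    ext j k
    have hjk : (A * B) j k = discInner (range (d + 1)) lam w (r j) (r k) /
        discInner (range (d + 1)) lam w (r j) (r j) := by
      conv_rhs => rw [discInner.eq_def _ _ _ _ (r k), Finset.sum_div, Finset.sum_range]
      simp only [Matrix.mul_apply, A, B, Matrix.of_apply]
      exact Finset.sum_congr rfl fun i _ => by ring
    rw [hjk, Matrix.one_apply]
    split_ifs with h
    · subst h
      exact div_self (hne _ (by lia))
    · rw [horth _ (by lia) _ (by lia) (fun e => h (Fin.ext e)), zero_div]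
  have hBA : B * A = 1 := mul_eq_one_comm.1 hAB
  have h := congrFun₂ hBA ⟨a, by lia⟩ ⟨b, by lia⟩
  rw [Finset.sum_range]
  simpa [Matrix.mul_apply, A, B, Matrix.one_apply] using h

/-- Lemma 1(c): the sum polynomials `s_j = r_0 + ⋯ + r_j` of the orthogonal sequence
satisfy `1 = s_0(λ_0) < s_1(λ_0) < ⋯ < s_d(λ_0) = 1/w_0` and `s_d(λ_i) = 0` for `i ≠ 0`. -/
theorem stmt_2 (d : ℕ) (lam : ℕ → ℝ) (hlam : StrictAntiOn lam (Set.Iic d))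
    (w : ℕ → ℝ) (hw : ∀ i ≤ d, 0 < w i)
    (hwsum : ∑ i ∈ Finset.range (d + 1), w i = 1)
    (r : ℕ → Polynomial ℝ)
    (hdeg : ∀ i ≤ d, (r i).degree = (i : WithBot ℕ))
    (horth : ∀ i ≤ d, ∀ j ≤ d, i ≠ j →
      discInner (Finset.range (d + 1)) lam w (r i) (r j) = 0)
    (hnorm : ∀ i ≤ d,
      discInner (Finset.range (d + 1)) lam w (r i) (r i) = (r i).eval (lam 0)) :
    (∑ i ∈ Finset.range 1, r i).eval (lam 0) = 1 ∧
    (∀ j, j < d →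
      (∑ i ∈ Finset.range (j + 1), r i).eval (lam 0)
        < (∑ i ∈ Finset.range (j + 2), r i).eval (lam 0)) ∧
    (∑ i ∈ Finset.range (d + 1), r i).eval (lam 0) = 1 / w 0 ∧
    (∀ i, 1 ≤ i → i ≤ d → (∑ j ∈ Finset.range (d + 1), r j).eval (lam i) = 0) := by
  have hpos : ∀ i ≤ d, 0 < (r i).eval (lam 0) := fun i hi => by
    rw [← hnorm i hi]
    refine discInner_self_pos (hlam.injOn.mono fun x hx => ?_) (fun x hx => hw x ?_) ?_ ?_
    · simp at hx ⊢
      lia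
    · simp at hx
      lia
    · intro h
      simpa [h] using hdeg i hi
    · rw [hdeg i hi, card_range]
      exact_mod_cast Nat.lt_succ_of_le hi
  have hsum : ∀ i ≤ d, (∑ j ∈ range (d + 1), r j).eval (lam i) * w 0 = if i = 0 then 1 else 0 := by
    intro i hi
    rw [← sum_eval_mul_eval_div_discInner horth (fun k hk => hnorm k hk ▸ (hpos k hk).ne')
      hi d.zero_le, eval_finsetSum, Finset.sum_mul]
    refine Finset.sum_congr rfl fun j hj => ?_
    have hj : j ≤ d := Nat.lt_succ_iff.1 (mem_range.1 hj)
    rw [hnorm j hj, mul_div_cancel_right₀ _ (hpos j hj).ne']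
  have hw0 := (hw 0 d.zero_le).ne'
  refine ⟨?_, fun j hj => ?_, ?_, fun i hi hid => ?_⟩
  · obtain ⟨c, hc⟩ : ∃ c, r 0 = C c := ⟨_, eq_C_of_degree_le_zero (hdeg 0 d.zero_le).le⟩
    have h := hnorm 0 d.zero_le
    have h0 := hpos 0 d.zero_le
    simp only [discInner, hc, eval_C, ← Finset.sum_mul, hwsum, one_mul] at h h0
    simpa [hc] using mul_right_cancel₀ h0.ne' (h.trans (one_mul c).symm)
  · rw [Finset.sum_range_succ _ (j + 1), eval_add]
    exact lt_add_of_pos_right _ (hpos (j + 1) hj)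
  · rw [eq_div_iff hw0, hsum 0 d.zero_le, if_pos rfl]
  · have h := hsum i hid
    rw [if_neg (by lia)] at h
    exact (mul_eq_zero.1 h).resolve_right hw0
end

section
/- Let Γ be a connected bipartite graph with stable sets V_1 and V_2 of sizes n_1 and n_2. Then the local multiplicities of the eigenvalue 0 satisfy Σ_{v∈V_2} m_v(0) = (1/2)(n_2 − n_1 + m(0)). -/
open Finset Matrix

/-- If `S` anticommutes with `A` and `E` is a two-sided eigenmatrix of `A` for a nonzero
eigenvalue, then `S * E` is traceless. -/
theorem Matrix.trace_mul_eq_zero_of_anticommute {V : Type*} [Fintype V]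
    {A S E : Matrix V V ℝ} {μ : ℝ} (hanti : A * S = -(S * A)) (hleft : A * E = μ • E)
    (hright : E * A = μ • E) (hμ : μ ≠ 0) : trace (S * E) = 0 := by
  have h : μ * trace (S * E) = -(μ * trace (S * E)) :=
    calc μ * trace (S * E) = trace (S * (E * A)) := by
          rw [hright, Matrix.mul_smul, trace_smul, smul_eq_mul]
      _ = trace (A * S * E) := by rw [← Matrix.mul_assoc, trace_mul_comm, Matrix.mul_assoc]
      _ = -trace (S * (A * E)) := by rw [hanti, Matrix.neg_mul, trace_neg, Matrix.mul_assoc]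
      _ = -(μ * trace (S * E)) := by rw [hleft, Matrix.mul_smul, trace_smul, smul_eq_mul]
  have h0 : μ * trace (S * E) = 0 := by linarith
  exact (mul_eq_zero.mp h0).resolve_left hμ

/-- The signature matrix of a bipartition anticommutes with the adjacency matrix. -/
theorem SimpleGraph.adjMatrix_mul_diagonal_sign {V : Type*} [Fintype V] [DecidableEq V]
    (G : SimpleGraph V) [DecidableRel G.Adj] (W : Finset V)
    (hind : ∀ u ∈ W, ∀ v ∈ W, ¬ G.Adj u v) (hind' : ∀ u ∉ W, ∀ v ∉ W, ¬ G.Adj u v) :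
    G.adjMatrix ℝ * diagonal (fun v => if v ∈ W then (1 : ℝ) else -1) =
      -(diagonal (fun v => if v ∈ W then (1 : ℝ) else -1) * G.adjMatrix ℝ) := by
  ext u v
  rw [Matrix.neg_apply, mul_diagonal, diagonal_mul, SimpleGraph.adjMatrix_apply]
  by_cases huv : G.Adj u v
  · have h₁ := hind u
    have h₂ := hind' u
    by_cases hu : u ∈ W <;> by_cases hv : v ∈ W <;> simp_all
  · simp [huv]

/-- Lemma 2(b2): in a connected bipartite graph with stable sets `V₁, V₂` of sizes
`n₁, n₂`, the local multiplicities of the eigenvalue `0` satisfy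
`∑_{v∈V₂} m_v(0) = (n₂ − n₁ + m(0))/2`, where `m(0)` is the multiplicity of `0`
(with `m(0) = 0` and `m_v(0) = 0` when `0` is not an eigenvalue; both sides below use
the sum over those indices `i` with `λ_i = 0`, which has at most one term). -/
theorem stmt_5 {V : Type*} [Fintype V] [DecidableEq V]
    (G : SimpleGraph V) [DecidableRel G.Adj] (hconn : G.Connected)
    (V1 V2 : Finset V) (hcover : V1 ∪ V2 = Finset.univ) (hdisj : Disjoint V1 V2)
    (hind1 : ∀ u ∈ V1, ∀ v ∈ V1, ¬ G.Adj u v)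
    (hind2 : ∀ u ∈ V2, ∀ v ∈ V2, ¬ G.Adj u v)
    (d : ℕ) (lam : ℕ → ℝ) (hlam : StrictAntiOn lam (Set.Iic d))
    (E : ℕ → Matrix V V ℝ)
    (hsym : ∀ i ≤ d, (E i).IsSymm)
    (hsum : ∑ i ∈ Finset.range (d + 1), E i = 1)
    (hmul : ∀ i ≤ d, ∀ j ≤ d, E i * E j = if i = j then E i else 0)
    (heig : ∀ i ≤ d, G.adjMatrix ℝ * E i = lam i • E i)
    (hnz : ∀ i ≤ d, E i ≠ 0) :
    ∑ v ∈ V2, (∑ i ∈ (Finset.range (d + 1)).filter (fun i => lam i = 0), E i v v)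
      = ((V2.card : ℝ) - (V1.card : ℝ)
          + ∑ i ∈ (Finset.range (d + 1)).filter (fun i => lam i = 0),
              Matrix.trace (E i)) / 2 := by
  have hmem : ∀ v, v ∉ V2 → v ∈ V1 := fun v hv =>
    (Finset.mem_union.mp (hcover ▸ Finset.mem_univ v)).resolve_right hv
  have hcompl : V1 = Finset.univ.filter (· ∉ V2) := by
    ext v
    simpa using ⟨fun h => Finset.disjoint_left.mp hdisj h, hmem v⟩
  set s : V → ℝ := fun v => if v ∈ V2 then 1 else -1 with hs
  have hanti : G.adjMatrix ℝ * diagonal s = -(diagonal s * G.adjMatrix ℝ) :=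
    G.adjMatrix_mul_diagonal_sign V2 hind2
      fun u hu v hv => hind1 u (hmem u hu) v (hmem v hv)
  have htrace : ∀ i ∈ Finset.range (d + 1), lam i ≠ 0 → trace (diagonal s * E i) = 0 := by
    intro i hi hne
    have hid : i ≤ d := Nat.lt_succ_iff.mp (Finset.mem_range.mp hi)
    refine trace_mul_eq_zero_of_anticommute hanti (heig i hid) ?_ hne
    have h := congrArg transpose (heig i hid)
    rwa [transpose_mul, transpose_smul, (hsym i hid).eq, SimpleGraph.transpose_adjMatrix] at h
  have hsign : ∑ i ∈ (Finset.range (d + 1)).filter (fun i => lam i = 0),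
      trace (diagonal s * E i) = (V2.card : ℝ) - V1.card := by
    rw [Finset.sum_filter_of_ne fun i hi h => not_not.mp (mt (htrace i hi) h), ← trace_sum,
      ← Matrix.mul_sum, hsum, Matrix.mul_one, trace_diagonal, hs, Finset.sum_ite, ← hcompl]
    simp [sub_eq_add_neg]
  have hlocal : ∀ i, ∑ v ∈ V2, E i v v = (trace (diagonal s * E i) + trace (E i)) / 2 := by
    intro i
    rw [← trace_add, trace, Finset.sum_div, ← Finset.sum_subset (Finset.subset_univ V2)]
    · refine Finset.sum_congr rfl fun v hv => ?_
      simp [hs, hv, diagonal_mul]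
    · intro v _ hv
      simp [hs, hv, diagonal_mul]
  rw [Finset.sum_comm, Finset.sum_congr rfl fun i _ => hlocal i, ← Finset.sum_div,
    Finset.sum_add_distrib, hsign]
end

section
/- Every connected graph Γ that is pseudo-distance-regular around each of its vertices is either distance-regular or distance-biregular. -/
open Finset Matrix

/-- `Γ_i(u)`: the set of vertices at distance `i` from `u`. -/
noncomputable def sphere {V : Type*} [Fintype V] [DecidableEq V] (G : SimpleGraph V)
    (u : V) (i : ℕ) : Finset V :=
  Finset.univ.filter (fun v => G.dist u v = i)

/-- `Γ` is pseudo-distance-regular around `u` (w.r.t. the positive eigenvector `α`):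
for every `i`, the numbers `c_i^*(v)`, `a_i^*(v)`, `b_i^*(v)` do not depend on the
choice of `v ∈ Γ_i(u)`. -/
def IsPDRAround {V : Type*} [Fintype V] [DecidableEq V] (G : SimpleGraph V)
    [DecidableRel G.Adj] (alpha : V → ℝ) (u : V) : Prop :=
  ∀ i : ℕ, ∀ v v' : V, G.dist u v = i → G.dist u v' = i →
    ((1 / alpha v) * ∑ w ∈ sphere G u (i - 1) ∩ G.neighborFinset v, alpha w
        = (1 / alpha v') * ∑ w ∈ sphere G u (i - 1) ∩ G.neighborFinset v', alpha w) ∧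
    ((1 / alpha v) * ∑ w ∈ sphere G u i ∩ G.neighborFinset v, alpha w
        = (1 / alpha v') * ∑ w ∈ sphere G u i ∩ G.neighborFinset v', alpha w) ∧
    ((1 / alpha v) * ∑ w ∈ sphere G u (i + 1) ∩ G.neighborFinset v, alpha w
        = (1 / alpha v') * ∑ w ∈ sphere G u (i + 1) ∩ G.neighborFinset v', alpha w)

/-- `Γ` is distance-regular: the intersection numbers `c_i(u,v)`, `a_i(u,v)`,
`b_i(u,v)` (for `v ∈ Γ_i(u)`) depend only on `i = dist(u,v)`. -/
def IsDistRegular {V : Type*} [Fintype V] [DecidableEq V] (G : SimpleGraph V)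
    [DecidableRel G.Adj] : Prop :=
  ∃ c a b : ℕ → ℕ, ∀ u v : V,
    (sphere G u (G.dist u v - 1) ∩ G.neighborFinset v).card = c (G.dist u v) ∧
    (sphere G u (G.dist u v) ∩ G.neighborFinset v).card = a (G.dist u v) ∧
    (sphere G u (G.dist u v + 1) ∩ G.neighborFinset v).card = b (G.dist u v)

/-- `Γ` is distance-biregular: it is bipartite with stable sets `V₁, V₂`, it is
distance-regular around each vertex, and the intersection array depends only on the
stable set containing the base vertex. -/
def IsDistBiregular {V : Type*} [Fintype V] [DecidableEq V] (G : SimpleGraph V)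
    [DecidableRel G.Adj] : Prop :=
  ∃ V1 V2 : Finset V, V1 ∪ V2 = Finset.univ ∧ Disjoint V1 V2 ∧
    (∀ u ∈ V1, ∀ v ∈ V1, ¬ G.Adj u v) ∧ (∀ u ∈ V2, ∀ v ∈ V2, ¬ G.Adj u v) ∧
    ∃ c1 a1 b1 c2 a2 b2 : ℕ → ℕ,
      (∀ u ∈ V1, ∀ v : V,
        (sphere G u (G.dist u v - 1) ∩ G.neighborFinset v).card = c1 (G.dist u v) ∧
        (sphere G u (G.dist u v) ∩ G.neighborFinset v).card = a1 (G.dist u v) ∧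
        (sphere G u (G.dist u v + 1) ∩ G.neighborFinset v).card = b1 (G.dist u v)) ∧
      (∀ u ∈ V2, ∀ v : V,
        (sphere G u (G.dist u v - 1) ∩ G.neighborFinset v).card = c2 (G.dist u v) ∧
        (sphere G u (G.dist u v) ∩ G.neighborFinset v).card = a2 (G.dist u v) ∧
        (sphere G u (G.dist u v + 1) ∩ G.neighborFinset v).card = b2 (G.dist u v))

/-- The restriction of `alpha` to the sphere of radius `n - 1` around `u`; it is zero for `n = 0`. -/
noncomputable def layer {V : Type*} (G : SimpleGraph V) (alpha : V → ℝ) (u : V) (n : ℕ) : V → ℝ :=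
  fun v => if G.dist u v + 1 = n then alpha v else 0

section PseudoDistanceRegular

variable {V : Type*} {G : SimpleGraph V} {alpha : V → ℝ}

lemma layer_zero (u : V) : layer G alpha u 0 = 0 := by
  ext v; simp [layer]

lemma layer_apply_of_eq {u v : V} {n : ℕ} (h : G.dist u v + 1 = n) :
    layer G alpha u n v = alpha v := by
  simp [layer, h]

lemma layer_apply_of_ne {u v : V} {n : ℕ} (h : G.dist u v + 1 ≠ n) :
    layer G alpha u n v = 0 := by
  simp [layer, h]

lemma layer_one [DecidableEq V] (hconn : G.Connected) (u : V) :
    layer G alpha u 1 = alpha u • Pi.single u 1 := by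
  ext v
  by_cases h : v = u
  · subst h; simp [layer]
  · have : G.dist u v ≠ 0 := fun h0 => h ((hconn.dist_eq_zero_iff.1 h0).symm)
    simp [layer, h, this]

lemma exists_adj_dist_eq (hconn : G.Connected) {u v : V} {n : ℕ} (h : G.dist u v = n + 1) :
    ∃ w, G.Adj w v ∧ G.dist u w = n := by
  obtain ⟨p, hp⟩ := hconn.exists_walk_length_eq_dist v u
  cases p with
  | nil => simp at h
  | @cons _ w _ hadj q =>
    refine ⟨w, hadj.symm, ?_⟩
    have h1 := G.dist_le q
    have h2 := hconn.dist_triangle (u := u) (v := w) (w := v)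
    have h3 := SimpleGraph.dist_eq_one_iff_adj.2 hadj.symm
    rw [SimpleGraph.dist_comm] at h1
    rw [SimpleGraph.Walk.length_cons, SimpleGraph.dist_comm, h] at hp
    omega

lemma dist_le_succ_of_adj (hconn : G.Connected) (u : V) {v w : V} (h : G.Adj v w) :
    G.dist u w ≤ G.dist u v + 1 := by
  have h2 := hconn.dist_triangle (u := u) (v := v) (w := w)
  rwa [SimpleGraph.dist_eq_one_iff_adj.2 h] at h2

variable [Fintype V] [DecidableEq V] [DecidableRel G.Adj]

lemma adjMatrix_mulVec_layer (u v : V) (n : ℕ) :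
    (G.adjMatrix ℝ *ᵥ layer G alpha u (n + 1)) v
      = ∑ w ∈ sphere G u n ∩ G.neighborFinset v, alpha w := by
  rw [SimpleGraph.adjMatrix_mulVec_apply, sphere, Finset.filter_inter, Finset.univ_inter,
    Finset.sum_filter]
  simp [layer]

/-- Around a vertex of a pseudo-distance-regular graph, the adjacency matrix maps every layer to a
vector whose ratio to `alpha` depends only on the distance. -/
lemma IsPDRAround.mulVec_layer_div (hconn : G.Connected) {u : V} (h : IsPDRAround G alpha u)
    (n : ℕ) {v v' : V} (hd : G.dist u v = G.dist u v') :
    (G.adjMatrix ℝ *ᵥ layer G alpha u n) v / alpha v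
      = (G.adjMatrix ℝ *ᵥ layer G alpha u n) v' / alpha v' := by
  cases n with
  | zero => simp [layer_zero]
  | succ n =>
    rw [adjMatrix_mulVec_layer, adjMatrix_mulVec_layer]
    obtain ⟨h1, h2, h3⟩ := h (G.dist u v) v v' rfl hd.symm
    simp only [one_div_mul_eq_div] at h1 h2 h3
    by_cases e1 : n = G.dist u v - 1
    · rw [e1]; exact h1
    by_cases e2 : n = G.dist u v
    · rw [e2]; exact h2
    by_cases e3 : n = G.dist u v + 1
    · rw [e3]; exact h3
    have key : ∀ x, G.dist u x = G.dist u v → sphere G u n ∩ G.neighborFinset x = ∅ := by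
      intro x hx
      ext w
      simp only [sphere, Finset.mem_inter, Finset.mem_filter, Finset.mem_univ, true_and,
        SimpleGraph.mem_neighborFinset, Finset.notMem_empty, iff_false, not_and]
      intro hw hadj
      have := dist_le_succ_of_adj hconn u hadj
      have := dist_le_succ_of_adj hconn u hadj.symm
      omega
    rw [key v rfl, key v' hd.symm]
    simp

/-- Neighbours of a common vertex have the same weight. -/
lemma IsPDRAround.weight_eq_of_adj (hconn : G.Connected) (hapos : ∀ v, 0 < alpha v) {u : V}
    (h : IsPDRAround G alpha u) {v v' : V} (hv : G.Adj u v) (hv' : G.Adj u v') :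
    alpha v = alpha v' := by
  have d1 := SimpleGraph.dist_eq_one_iff_adj.2 hv
  have d2 := SimpleGraph.dist_eq_one_iff_adj.2 hv'
  have := h.mulVec_layer_div hconn 1 (d1.trans d2.symm)
  have key : ∀ x, G.Adj u x → (G.adjMatrix ℝ *ᵥ layer G alpha u 1) x = alpha u := by
    intro x hx
    rw [layer_one hconn, Matrix.mulVec_smul]
    simp [SimpleGraph.adjMatrix_apply, hx.symm]
  rw [key v hv, key v' hv', div_eq_div_iff (hapos v).ne' (hapos v').ne'] at this
  exact (mul_left_cancel₀ (hapos u).ne' this).symm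

/-- Weights alternate between the two values taken at the ends of any given edge. -/
lemma weight_dichotomy (hconn : G.Connected) (hapos : ∀ v, 0 < alpha v)
    (hpdr : ∀ u : V, IsPDRAround G alpha u) {u w : V} (huw : G.Adj u w) (x : V) :
    (alpha x = alpha u ∧ ∀ z, G.Adj x z → alpha z = alpha w) ∨
      (alpha x = alpha w ∧ ∀ z, G.Adj x z → alpha z = alpha u) := by
  obtain ⟨p⟩ := hconn.preconnected x u
  induction p with
  | nil => exact Or.inl ⟨rfl, fun z hz => (hpdr _).weight_eq_of_adj hconn hapos hz huw⟩
  | @cons x y _ hxy p ih =>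
    rcases ih huw with ⟨h1, h2⟩ | ⟨h1, h2⟩
    · exact Or.inr ⟨h2 x hxy.symm, fun z hz =>
        ((hpdr x).weight_eq_of_adj hconn hapos hz hxy).trans h1⟩
    · exact Or.inl ⟨h2 x hxy.symm, fun z hz =>
        ((hpdr x).weight_eq_of_adj hconn hapos hz hxy).trans h1⟩

lemma weight_eq_of_adj_of_weight_eq (hconn : G.Connected) (hapos : ∀ v, 0 < alpha v)
    (hpdr : ∀ u : V, IsPDRAround G alpha u) {u u' w w' : V} (huw : G.Adj u w) (huw' : G.Adj u' w')
    (h : alpha u = alpha u') : alpha w = alpha w' := by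
  rcases weight_dichotomy hconn hapos hpdr huw u' with ⟨-, h2⟩ | ⟨h1, h2⟩
  · exact (h2 w' huw').symm
  · rw [h2 w' huw', h, h1]

lemma weight_eq_of_dist_eq (hconn : G.Connected) (hapos : ∀ v, 0 < alpha v)
    (hpdr : ∀ u : V, IsPDRAround G alpha u) {u u' : V} (h : alpha u = alpha u') (n : ℕ) {v v' : V}
    (hv : G.dist u v = n) (hv' : G.dist u' v' = n) : alpha v = alpha v' := by
  induction n generalizing v v' with
  | zero => rwa [← hconn.dist_eq_zero_iff.1 hv, ← hconn.dist_eq_zero_iff.1 hv']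
  | succ n ih =>
    obtain ⟨w, hw, hwd⟩ := exists_adj_dist_eq hconn hv
    obtain ⟨w', hw', hwd'⟩ := exists_adj_dist_eq hconn hv'
    exact weight_eq_of_adj_of_weight_eq hconn hapos hpdr hw hw' (ih hwd hwd')

/-- The entries of a power of the adjacency matrix in column `u`, relative to `alpha`, depend only
on the distance to `u`. -/
lemma IsPDRAround.exists_pow_adjMatrix_eq (hconn : G.Connected) (hapos : ∀ v, 0 < alpha v) {u : V}
    (h : IsPDRAround G alpha u) (l : ℕ) :
    ∃ g : ℕ → ℝ, ∀ v, (G.adjMatrix ℝ ^ l) v u = g (G.dist u v) * alpha v := by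
  induction l with
  | zero =>
    refine ⟨fun d => if d = 0 then (alpha u)⁻¹ else 0, fun v => ?_⟩
    by_cases hv : v = u
    · subst hv; simp [(hapos v).ne']
    · have : G.dist u v ≠ 0 := fun h0 => hv ((hconn.dist_eq_zero_iff.1 h0).symm)
      simp [hv, this]
  | succ l ih =>
    obtain ⟨g, hg⟩ := ih
    have hsum : (fun v => (G.adjMatrix ℝ ^ l) v u)
        = ∑ n ∈ Finset.univ.image (G.dist u), g n • layer G alpha u (n + 1) := by
      ext v
      rw [hg, Finset.sum_apply, Finset.sum_eq_single (G.dist u v)]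
      · simp [layer]
      · intro n _ hn
        simp [layer, hn.symm]
      · simp
    have hentry : ∀ v, (G.adjMatrix ℝ ^ (l + 1)) v u = ∑ n ∈ Finset.univ.image (G.dist u),
        g n * (G.adjMatrix ℝ *ᵥ layer G alpha u (n + 1)) v := by
      intro v
      have : (G.adjMatrix ℝ ^ (l + 1)) v u
          = (G.adjMatrix ℝ *ᵥ fun v => (G.adjMatrix ℝ ^ l) v u) v := by
        rw [pow_succ', Matrix.mul_apply]; rfl
      rw [this, hsum, Matrix.mulVec_sum, Finset.sum_apply]
      simp only [Matrix.mulVec_smul, Pi.smul_apply, smul_eq_mul]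
    have hfac : ∀ v v', G.dist u v = G.dist u v' →
        (G.adjMatrix ℝ ^ (l + 1)) v u / alpha v = (G.adjMatrix ℝ ^ (l + 1)) v' u / alpha v' := by
      intro v v' hd
      rw [hentry, hentry, Finset.sum_div, Finset.sum_div]
      refine Finset.sum_congr rfl fun n _ => ?_
      rw [mul_div_assoc, mul_div_assoc, h.mulVec_layer_div hconn _ hd]
    refine ⟨fun d => if hd : ∃ v, G.dist u v = d then
      (G.adjMatrix ℝ ^ (l + 1)) hd.choose u / alpha hd.choose else 0, fun v => ?_⟩
    have hd : ∃ x, G.dist u x = G.dist u v := ⟨v, rfl⟩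
    simp only [dif_pos hd]
    rw [hfac _ _ hd.choose_spec, div_mul_cancel₀ _ (hapos v).ne']

/-- Closed walks from `u` all leave along edges that are equivalent for counting purposes. -/
lemma IsPDRAround.pow_succ_adjMatrix_diag (hconn : G.Connected) (hapos : ∀ v, 0 < alpha v)
    {u w : V} (h : IsPDRAround G alpha u) (huw : G.Adj u w) (l : ℕ) :
    (G.adjMatrix ℝ ^ (l + 1)) u u = G.degree u * (G.adjMatrix ℝ ^ l) w u := by
  obtain ⟨g, hg⟩ := h.exists_pow_adjMatrix_eq hconn hapos l
  rw [pow_succ', SimpleGraph.adjMatrix_mul_apply,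
    Finset.sum_eq_card_nsmul (b := (G.adjMatrix ℝ ^ l) w u), nsmul_eq_mul,
    SimpleGraph.card_neighborFinset_eq_degree]
  intro v hv
  rw [SimpleGraph.mem_neighborFinset] at hv
  rw [hg, hg, SimpleGraph.dist_eq_one_iff_adj.2 hv, SimpleGraph.dist_eq_one_iff_adj.2 huw,
    h.weight_eq_of_adj hconn hapos hv huw]

lemma pow_adjMatrix_diag_mul_degree (hconn : G.Connected) (hapos : ∀ v, 0 < alpha v)
    (hpdr : ∀ u : V, IsPDRAround G alpha u) (l : ℕ) (u v : V) :
    (G.adjMatrix ℝ ^ (l + 1)) u u * G.degree v = (G.adjMatrix ℝ ^ (l + 1)) v v * G.degree u := by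
  obtain ⟨p⟩ := hconn.preconnected u v
  induction p with
  | nil => rfl
  | @cons u w v huw p ih =>
    have hsymm : (G.adjMatrix ℝ ^ l) w u = (G.adjMatrix ℝ ^ l) u w :=
      ((G.isSymm_adjMatrix (α := ℝ)).pow l).apply u w
    have hw : (G.degree w : ℝ) ≠ 0 := by
      exact_mod_cast ((G.degree_pos_iff_exists_adj w).2 ⟨u, huw.symm⟩).ne'
    rw [(hpdr w).pow_succ_adjMatrix_diag hconn hapos huw.symm] at ih
    rw [(hpdr u).pow_succ_adjMatrix_diag hconn hapos huw, hsymm]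
    apply mul_left_cancel₀ hw
    linear_combination (G.degree u : ℝ) * ih

/-- Vertices of equal weight have the same number of closed walks of each length. -/
lemma pow_adjMatrix_diag_eq (hconn : G.Connected) (hapos : ∀ v, 0 < alpha v) {lam0 : ℝ}
    (haeig : G.adjMatrix ℝ *ᵥ alpha = lam0 • alpha)
    (hpdr : ∀ u : V, IsPDRAround G alpha u) {u u' : V} (h : alpha u = alpha u') (l : ℕ) :
    (G.adjMatrix ℝ ^ l) u u = (G.adjMatrix ℝ ^ l) u' u' := by
  rcases eq_or_ne u u' with rfl | hne
  · rfl
  have : Nontrivial V := ⟨u, u', hne⟩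
  cases l with
  | zero => simp
  | succ l =>
    obtain ⟨w, hw⟩ :=
      (G.degree_pos_iff_exists_adj u).1 (hconn.preconnected.degree_pos_of_nontrivial u)
    obtain ⟨w', hw'⟩ :=
      (G.degree_pos_iff_exists_adj u').1 (hconn.preconnected.degree_pos_of_nontrivial u')
    have hdeg : ∀ x y, G.Adj x y → (G.degree x : ℝ) * alpha y = lam0 * alpha x := by
      intro x y hxy
      have := congrFun haeig x
      rw [SimpleGraph.adjMatrix_mulVec_apply, Finset.sum_eq_card_nsmul (b := alpha y)] at this
      · simpa using this
      · intro z hz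
        exact (hpdr x).weight_eq_of_adj hconn hapos ((G.mem_neighborFinset x z).1 hz) hxy
    have hww := weight_eq_of_adj_of_weight_eq hconn hapos hpdr hw hw' h
    have h1 := hdeg u w hw
    rw [hww, h, ← hdeg u' w' hw'] at h1
    have h2 := mul_right_cancel₀ (hapos w').ne' h1
    have h3 := pow_adjMatrix_diag_mul_degree hconn hapos hpdr l u u'
    rw [h2] at h3
    refine mul_right_cancel₀ ?_ h3
    exact_mod_cast (hconn.preconnected.degree_pos_of_nontrivial u').ne'

end PseudoDistanceRegular

section Moments

variable {V : Type*} [Fintype V] [DecidableEq V]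

open Polynomial

lemma Matrix.IsSymm.aeval {A : Matrix V V ℝ} (hA : A.IsSymm) (p : ℝ[X]) :
    (Polynomial.aeval A p).IsSymm := by
  induction p using Polynomial.induction_on' with
  | add p q hp hq => rw [map_add]; exact hp.add hq
  | monomial n a =>
    rw [Polynomial.aeval_monomial, ← Algebra.smul_def]
    exact (hA.pow n).smul a

lemma aeval_diag_eq {A : Matrix V V ℝ} {u u' : V} (h : ∀ l : ℕ, (A ^ l) u u = (A ^ l) u' u')
    (p : ℝ[X]) : Polynomial.aeval A p u u = Polynomial.aeval A p u' u' := by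
  induction p using Polynomial.induction_on' with
  | add p q hp hq => simp [hp, hq]
  | monomial n a => simp [Polynomial.aeval_monomial, ← Algebra.smul_def, h]

/-- Inner products of polynomials in `A` applied to `c • e_u` only depend on the moments at `u`. -/
lemma aeval_mulVec_dotProduct {A : Matrix V V ℝ} (hA : A.IsSymm) (c : ℝ) (u : V) (p q : ℝ[X]) :
    (Polynomial.aeval A p *ᵥ (c • Pi.single u 1)) ⬝ᵥ (Polynomial.aeval A q *ᵥ (c • Pi.single u 1))
      = c ^ 2 * Polynomial.aeval A (p * q) u u := by
  rw [Matrix.dotProduct_mulVec, ← Matrix.mulVec_transpose, (hA.aeval q).eq, Matrix.mulVec_mulVec,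
    ← map_mul, mul_comm q p, Matrix.mulVec_smul]
  simp
  ring

lemma aeval_mulVec_dotProduct_eq {A : Matrix V V ℝ} (hA : A.IsSymm) {c c' : ℝ} (hc : c = c')
    {u u' : V} (h : ∀ l : ℕ, (A ^ l) u u = (A ^ l) u' u') (p q : ℝ[X]) :
    (Polynomial.aeval A p *ᵥ (c • Pi.single u 1)) ⬝ᵥ (Polynomial.aeval A q *ᵥ (c • Pi.single u 1))
      = (Polynomial.aeval A p *ᵥ (c' • Pi.single u' 1))
        ⬝ᵥ (Polynomial.aeval A q *ᵥ (c' • Pi.single u' 1)) := by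
  rw [aeval_mulVec_dotProduct hA, aeval_mulVec_dotProduct hA, hc, aeval_diag_eq h]

lemma mulVec_aeval_mulVec (A : Matrix V V ℝ) (p : ℝ[X]) (x : V → ℝ) :
    A *ᵥ (Polynomial.aeval A p *ᵥ x) = Polynomial.aeval A (X * p) *ᵥ x := by
  rw [map_mul, Polynomial.aeval_X, Matrix.mulVec_mulVec]

end Moments

section Layers

variable {V : Type*} [Fintype V] {G : SimpleGraph V} {alpha : V → ℝ}

lemma layer_dotProduct_self_ne_zero (hapos : ∀ v, 0 < alpha v) (u v : V) :
    layer G alpha u (G.dist u v + 1) ⬝ᵥ layer G alpha u (G.dist u v + 1) ≠ 0 := by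
  intro h
  have := congrFun (dotProduct_self_eq_zero.1 h) v
  rw [layer_apply_of_eq rfl] at this
  exact (hapos v).ne' this

lemma layer_dotProduct_weight (u : V) (n : ℕ) :
    layer G alpha u n ⬝ᵥ alpha = layer G alpha u n ⬝ᵥ layer G alpha u n := by
  refine Finset.sum_congr rfl fun w _ => ?_
  by_cases hw : G.dist u w + 1 = n
  · rw [layer_apply_of_eq hw]
  · simp [layer_apply_of_ne hw]

variable [DecidableRel G.Adj]

lemma mulVec_layer_dotProduct_pos (hconn : G.Connected) (hapos : ∀ v, 0 < alpha v) {u v : V}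
    {n : ℕ} (hv : G.dist u v = n + 1) :
    0 < (G.adjMatrix ℝ *ᵥ layer G alpha u (n + 1)) ⬝ᵥ layer G alpha u (n + 2) := by
  have hnn : ∀ m x, 0 ≤ layer G alpha u m x := by
    intro m x
    unfold layer
    split_ifs
    exacts [(hapos x).le, le_rfl]
  obtain ⟨w, hw, hwd⟩ := exists_adj_dist_eq hconn hv
  have hA : ∀ x, 0 ≤ (G.adjMatrix ℝ *ᵥ layer G alpha u (n + 1)) x := by
    intro x
    rw [SimpleGraph.adjMatrix_mulVec_apply]
    exact Finset.sum_nonneg fun z _ => hnn _ z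
  refine Finset.sum_pos' (fun x _ => mul_nonneg (hA x) (hnn _ x)) ⟨v, Finset.mem_univ v, ?_⟩
  refine mul_pos ?_ ?_
  · rw [SimpleGraph.adjMatrix_mulVec_apply]
    refine Finset.sum_pos' (fun z _ => hnn _ z)
      ⟨w, (G.mem_neighborFinset v w).2 hw.symm, ?_⟩
    rw [layer_apply_of_eq (by omega)]
    exact hapos w
  · rw [layer_apply_of_eq (by omega)]
    exact hapos v

variable [DecidableEq V]

/-- The constant ratio of `A F_n` to `alpha` on a sphere is a ratio of inner products of layers. -/
lemma IsPDRAround.mulVec_layer_apply (hconn : G.Connected) (hapos : ∀ v, 0 < alpha v) {u : V}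
    (h : IsPDRAround G alpha u) (n : ℕ) (v : V) :
    (G.adjMatrix ℝ *ᵥ layer G alpha u n) v
      = ((G.adjMatrix ℝ *ᵥ layer G alpha u n) ⬝ᵥ layer G alpha u (G.dist u v + 1))
        / (layer G alpha u (G.dist u v + 1) ⬝ᵥ layer G alpha u (G.dist u v + 1)) * alpha v := by
  have hK := layer_dotProduct_self_ne_zero (G := G) hapos u v
  have : (G.adjMatrix ℝ *ᵥ layer G alpha u n) ⬝ᵥ layer G alpha u (G.dist u v + 1)
      = (G.adjMatrix ℝ *ᵥ layer G alpha u n) v / alpha v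
        * (layer G alpha u (G.dist u v + 1) ⬝ᵥ layer G alpha u (G.dist u v + 1)) := by
    simp only [dotProduct, Finset.mul_sum]
    refine Finset.sum_congr rfl fun w _ => ?_
    by_cases hw : G.dist u w = G.dist u v
    · rw [layer_apply_of_eq (by rw [hw]), h.mulVec_layer_div hconn n hw.symm]
      have := (hapos w).ne'
      field_simp
    · rw [layer_apply_of_ne (by simpa using hw)]
      simp
  rw [this, mul_div_cancel_right₀ _ hK, div_mul_cancel₀ _ (hapos v).ne']

/-- The three-term recurrence satisfied by the layers. -/
lemma IsPDRAround.mulVec_layer_succ (hconn : G.Connected) (hapos : ∀ v, 0 < alpha v) {u : V}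
    (h : IsPDRAround G alpha u) (n : ℕ) :
    G.adjMatrix ℝ *ᵥ layer G alpha u (n + 1)
      = (((G.adjMatrix ℝ *ᵥ layer G alpha u (n + 1)) ⬝ᵥ layer G alpha u n)
          / (layer G alpha u n ⬝ᵥ layer G alpha u n)) • layer G alpha u n
      + (((G.adjMatrix ℝ *ᵥ layer G alpha u (n + 1)) ⬝ᵥ layer G alpha u (n + 1))
          / (layer G alpha u (n + 1) ⬝ᵥ layer G alpha u (n + 1))) • layer G alpha u (n + 1)
      + (((G.adjMatrix ℝ *ᵥ layer G alpha u (n + 1)) ⬝ᵥ layer G alpha u (n + 2))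
          / (layer G alpha u (n + 2) ⬝ᵥ layer G alpha u (n + 2))) • layer G alpha u (n + 2) := by
  ext v
  simp only [Pi.add_apply, Pi.smul_apply, smul_eq_mul]
  by_cases e1 : G.dist u v + 1 = n
  · rw [h.mulVec_layer_apply hconn hapos, e1, layer_apply_of_eq e1, layer_apply_of_ne (by omega),
      layer_apply_of_ne (by omega)]
    ring
  by_cases e2 : G.dist u v + 1 = n + 1
  · rw [h.mulVec_layer_apply hconn hapos, e2, layer_apply_of_eq e2, layer_apply_of_ne (by omega),
      layer_apply_of_ne (by omega)]
    ring
  by_cases e3 : G.dist u v + 1 = n + 2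
  · rw [h.mulVec_layer_apply hconn hapos, e3, layer_apply_of_eq e3, layer_apply_of_ne (by omega),
      layer_apply_of_ne (by omega)]
    ring
  rw [layer_apply_of_ne e1, layer_apply_of_ne e2, layer_apply_of_ne e3,
    SimpleGraph.adjMatrix_mulVec_apply]
  simp only [mul_zero, add_zero]
  refine Finset.sum_eq_zero fun w hw => layer_apply_of_ne ?_
  rw [SimpleGraph.mem_neighborFinset] at hw
  have := dist_le_succ_of_adj hconn u hw
  have := dist_le_succ_of_adj hconn u hw.symm
  omega

/-- Solving the three-term recurrence for the next layer. All the coefficients are expressed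
through inner products of the two preceding layers and their images under `A`. -/
lemma IsPDRAround.layer_succ_succ (hconn : G.Connected) (hapos : ∀ v, 0 < alpha v) {lam0 : ℝ}
    (haeig : G.adjMatrix ℝ *ᵥ alpha = lam0 • alpha) {u : V} (h : IsPDRAround G alpha u) (n : ℕ)
    {x y z : V → ℝ} {a b : ℝ} (hx : x = layer G alpha u n) (hy : y = layer G alpha u (n + 1))
    (hb : b = ((G.adjMatrix ℝ *ᵥ y) ⬝ᵥ x) / (x ⬝ᵥ x))
    (ha : a = ((G.adjMatrix ℝ *ᵥ y) ⬝ᵥ y) / (y ⬝ᵥ y))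
    (hz : z = G.adjMatrix ℝ *ᵥ y - b • x - a • y) :
    layer G alpha u (n + 2)
      = ((lam0 * (y ⬝ᵥ y) - b * (x ⬝ᵥ x) - a * (y ⬝ᵥ y)) / (z ⬝ᵥ z)) • z := by
  have hrec := h.mulVec_layer_succ hconn hapos n
  set w := layer G alpha u (n + 2) with hw
  rw [← hx, ← hy, ← hb, ← ha] at hrec
  set c := ((G.adjMatrix ℝ *ᵥ y) ⬝ᵥ w) / (w ⬝ᵥ w) with hc
  have hzc : z = c • w := by rw [hz, hrec]; abel
  by_cases hw0 : w = 0
  · rw [hzc, hw0]; simp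
  have hK : w ⬝ᵥ w ≠ 0 := fun h0 => hw0 (dotProduct_self_eq_zero.1 h0)
  have hc0 : c ≠ 0 := by
    obtain ⟨v, hv⟩ := Function.ne_iff.1 hw0
    have hd : G.dist u v + 1 = n + 2 := by
      by_contra hd
      exact hv (layer_apply_of_ne hd)
    refine div_ne_zero ?_ hK
    rw [hy, hw]
    exact (mulVec_layer_dotProduct_pos (v := v) hconn hapos (by omega)).ne'
  have hs : lam0 * (y ⬝ᵥ y) - b * (x ⬝ᵥ x) - a * (y ⬝ᵥ y) = c * (w ⬝ᵥ w) := by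
    have h1 : (G.adjMatrix ℝ *ᵥ y) ⬝ᵥ alpha = lam0 * (y ⬝ᵥ alpha) := by
      rw [dotProduct_comm, Matrix.dotProduct_mulVec, ← Matrix.mulVec_transpose,
        SimpleGraph.transpose_adjMatrix, haeig, smul_dotProduct, dotProduct_comm, smul_eq_mul]
    rw [hrec] at h1
    simp only [add_dotProduct, smul_dotProduct, smul_eq_mul] at h1
    rw [hx, hy, hw, layer_dotProduct_weight, layer_dotProduct_weight, layer_dotProduct_weight,
      ← hx, ← hy, ← hw] at h1
    linarith
  rw [hs, hzc, smul_dotProduct, dotProduct_smul, smul_smul]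
  have : c * (w ⬝ᵥ w) / (c • (c • (w ⬝ᵥ w))) * c = 1 := by
    simp only [smul_eq_mul]
    field_simp
  rw [this, one_smul]

open Polynomial in
/-- If two vertices have equal weights and equal closed walk counts, the same polynomials in the
adjacency matrix produce the layers around both. -/
lemma exists_aeval_mulVec_eq_layer (hconn : G.Connected) (hapos : ∀ v, 0 < alpha v) {lam0 : ℝ}
    (haeig : G.adjMatrix ℝ *ᵥ alpha = lam0 • alpha) {u u' : V} (h : IsPDRAround G alpha u)
    (h' : IsPDRAround G alpha u') (hw : alpha u = alpha u')
    (hwalk : ∀ l : ℕ, (G.adjMatrix ℝ ^ l) u u = (G.adjMatrix ℝ ^ l) u' u') (n : ℕ) :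
    ∃ p : ℝ[X], aeval (G.adjMatrix ℝ) p *ᵥ (alpha u • Pi.single u 1) = layer G alpha u n ∧
      aeval (G.adjMatrix ℝ) p *ᵥ (alpha u' • Pi.single u' 1) = layer G alpha u' n := by
  have hdot := aeval_mulVec_dotProduct_eq G.isSymm_adjMatrix hw hwalk
  induction n using Nat.twoStepInduction with
  | zero => exact ⟨0, by simp [layer_zero]⟩
  | one => exact ⟨1, by simp [layer_one hconn]⟩
  | more n ih0 ih1 =>
    obtain ⟨p, hp, hp'⟩ := ih0
    obtain ⟨q, hq, hq'⟩ := ih1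
    have hz : ∀ (a b : ℝ) (x : V → ℝ), G.adjMatrix ℝ *ᵥ (aeval (G.adjMatrix ℝ) q *ᵥ x)
        - b • (aeval (G.adjMatrix ℝ) p *ᵥ x) - a • (aeval (G.adjMatrix ℝ) q *ᵥ x)
        = aeval (G.adjMatrix ℝ) (X * q - b • p - a • q) *ᵥ x := by
      intro a b x
      rw [mulVec_aeval_mulVec, map_sub, map_sub, map_smul, map_smul, Matrix.sub_mulVec,
        Matrix.sub_mulVec, Matrix.smul_mulVec, Matrix.smul_mulVec]
    have e := h.layer_succ_succ hconn hapos haeig n hp hq rfl rfl rfl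
    have e' := h'.layer_succ_succ hconn hapos haeig n hp' hq' rfl rfl rfl
    simp only [hz] at e e'
    simp only [mulVec_aeval_mulVec, hdot] at e
    simp only [mulVec_aeval_mulVec] at e'
    simp only [← Matrix.smul_mulVec, ← map_smul] at e e'
    refine ⟨_, e.symm, ?_⟩
    rw [e', map_smul]

/-- The intersection numbers depend only on the weight of the base vertex and on the distance. -/
lemma card_sphere_inter_neighborFinset_eq (hconn : G.Connected) (hapos : ∀ v, 0 < alpha v)
    {lam0 : ℝ} (haeig : G.adjMatrix ℝ *ᵥ alpha = lam0 • alpha)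
    (hpdr : ∀ u : V, IsPDRAround G alpha u) {u u' v v' : V} (hw : alpha u = alpha u')
    (hd : G.dist u v = G.dist u' v') (n : ℕ) :
    (sphere G u n ∩ G.neighborFinset v).card = (sphere G u' n ∩ G.neighborFinset v').card := by
  have hpoly := exists_aeval_mulVec_eq_layer hconn hapos haeig (hpdr u) (hpdr u') hw
    (pow_adjMatrix_diag_eq hconn hapos haeig hpdr hw)
  have hdot := aeval_mulVec_dotProduct_eq G.isSymm_adjMatrix hw
    (pow_adjMatrix_diag_eq hconn hapos haeig hpdr hw)
  have hv := weight_eq_of_dist_eq hconn hapos hpdr hw _ hd rfl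
  have hsum : ∑ w ∈ sphere G u n ∩ G.neighborFinset v, alpha w
      = ∑ w ∈ sphere G u' n ∩ G.neighborFinset v', alpha w := by
    rw [← adjMatrix_mulVec_layer, ← adjMatrix_mulVec_layer,
      (hpdr u).mulVec_layer_apply hconn hapos, (hpdr u').mulVec_layer_apply hconn hapos, hd, hv]
    obtain ⟨p, hp, hp'⟩ := hpoly (n + 1)
    obtain ⟨q, hq, hq'⟩ := hpoly (G.dist u' v' + 1)
    rw [← hp, ← hp', ← hq, ← hq', mulVec_aeval_mulVec, mulVec_aeval_mulVec,
      hdot, hdot]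
  by_cases hadj : (∃ w, G.Adj v w) ∧ ∃ w', G.Adj v' w'
  · obtain ⟨⟨w, hvw⟩, w', hvw'⟩ := hadj
    have hww := weight_eq_of_adj_of_weight_eq hconn hapos hpdr hvw hvw' hv
    rw [Finset.sum_eq_card_nsmul (b := alpha w), Finset.sum_eq_card_nsmul (b := alpha w)] at hsum
    · simp only [nsmul_eq_mul] at hsum
      exact_mod_cast mul_right_cancel₀ (hapos w).ne' hsum
    · intro z hz
      rw [hww]
      exact (hpdr v').weight_eq_of_adj hconn hapos
        ((G.mem_neighborFinset _ _).1 (Finset.mem_inter.1 hz).2) hvw'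
    · intro z hz
      exact (hpdr v).weight_eq_of_adj hconn hapos
        ((G.mem_neighborFinset _ _).1 (Finset.mem_inter.1 hz).2) hvw
  · have hss : Subsingleton V := by
      by_contra hns
      rw [not_subsingleton_iff_nontrivial] at hns
      exact hadj ⟨(G.degree_pos_iff_exists_adj v).1 (hconn.preconnected.degree_pos_of_nontrivial v),
        (G.degree_pos_iff_exists_adj v').1 (hconn.preconnected.degree_pos_of_nontrivial v')⟩
    have hu : u = u' := Subsingleton.elim _ _
    have hvv : v = v' := Subsingleton.elim _ _
    rw [hu, hvv]

/-- Intersection arrays exist for every class of vertices of equal weight. -/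
lemma exists_intersection_array (hconn : G.Connected) (hapos : ∀ v, 0 < alpha v)
    {lam0 : ℝ} (haeig : G.adjMatrix ℝ *ᵥ alpha = lam0 • alpha)
    (hpdr : ∀ u : V, IsPDRAround G alpha u) (s : ℝ) :
    ∃ c a b : ℕ → ℕ, ∀ u, alpha u = s → ∀ v,
      (sphere G u (G.dist u v - 1) ∩ G.neighborFinset v).card = c (G.dist u v) ∧
      (sphere G u (G.dist u v) ∩ G.neighborFinset v).card = a (G.dist u v) ∧
      (sphere G u (G.dist u v + 1) ∩ G.neighborFinset v).card = b (G.dist u v) := by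
  have key : ∀ r : ℕ → ℕ, ∃ f : ℕ → ℕ, ∀ u, alpha u = s → ∀ v,
      (sphere G u (r (G.dist u v)) ∩ G.neighborFinset v).card = f (G.dist u v) := by
    classical
    intro r
    refine ⟨fun d => if hd : ∃ x : V × V, alpha x.1 = s ∧ G.dist x.1 x.2 = d then
      (sphere G hd.choose.1 (r d) ∩ G.neighborFinset hd.choose.2).card else 0, fun u hu v => ?_⟩
    have hd : ∃ x : V × V, alpha x.1 = s ∧ G.dist x.1 x.2 = G.dist u v := ⟨(u, v), hu, rfl⟩
    simp only [dif_pos hd]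
    exact card_sphere_inter_neighborFinset_eq hconn hapos haeig hpdr
      (hu.trans hd.choose_spec.1.symm) hd.choose_spec.2.symm _
  obtain ⟨c, hc⟩ := key fun d => d - 1
  obtain ⟨a, ha⟩ := key fun d => d
  obtain ⟨b, hb⟩ := key fun d => d + 1
  exact ⟨c, a, b, fun u hu v => ⟨hc u hu v, ha u hu v, hb u hu v⟩⟩

end Layers

/-- Theorem 2.3: every connected graph that is pseudo-distance-regular around each of
its vertices is either distance-regular or distance-biregular. -/
theorem stmt_10 {V : Type*} [Fintype V] [DecidableEq V]
    (G : SimpleGraph V) [DecidableRel G.Adj] (hconn : G.Connected)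
    (lam0 : ℝ) (alpha : V → ℝ) (hapos : ∀ v, 0 < alpha v)
    (haeig : G.adjMatrix ℝ *ᵥ alpha = lam0 • alpha)
    (hanorm : ∑ v : V, alpha v ^ 2 = (Fintype.card V : ℝ))
    (hpdr : ∀ u : V, IsPDRAround G alpha u) :
    IsDistRegular G ∨ IsDistBiregular G := by
  have harr := exists_intersection_array hconn hapos haeig hpdr
  obtain ⟨u₀⟩ := hconn.nonempty
  by_cases hconst : ∀ x, alpha x = alpha u₀
  · obtain ⟨c, a, b, h⟩ := harr (alpha u₀)
    exact Or.inl ⟨c, a, b, fun u v => h u (hconst u) v⟩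
  · right
    push Not at hconst
    obtain ⟨x₀, hx₀⟩ := hconst
    have : Nontrivial V := ⟨x₀, u₀, fun h => hx₀ (h ▸ rfl)⟩
    obtain ⟨w₀, hw₀⟩ :=
      (G.degree_pos_iff_exists_adj u₀).1 (hconn.preconnected.degree_pos_of_nontrivial u₀)
    have hdich := weight_dichotomy hconn hapos hpdr hw₀
    have hne : alpha w₀ ≠ alpha u₀ := by
      intro h
      rcases hdich x₀ with ⟨h1, -⟩ | ⟨h1, -⟩
      exacts [hx₀ h1, hx₀ (h1.trans h)]
    have hV2 : ∀ u, alpha u ≠ alpha u₀ → alpha u = alpha w₀ := fun u hu =>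
      (hdich u).elim (fun h => absurd h.1 hu) fun h => h.1
    obtain ⟨c1, a1, b1, h1⟩ := harr (alpha u₀)
    obtain ⟨c2, a2, b2, h2⟩ := harr (alpha w₀)
    refine ⟨Finset.univ.filter fun u => alpha u = alpha u₀,
      Finset.univ.filter fun u => ¬ alpha u = alpha u₀, Finset.filter_union_filter_not_eq _ _,
      Finset.disjoint_filter_filter_not _ _ _, ?_, ?_, c1, a1, b1, c2, a2, b2, ?_, ?_⟩
    · intro u hu v hv hadj
      rw [Finset.mem_filter_univ] at hu hv
      rw [← hv, ← weight_eq_of_adj_of_weight_eq hconn hapos hpdr hadj hw₀ hu] at hne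
      exact hne rfl
    · intro u hu v hv hadj
      rw [Finset.mem_filter_univ] at hu hv
      exact hv (weight_eq_of_adj_of_weight_eq hconn hapos hpdr hadj hw₀.symm (hV2 u hu))
    · intro u hu
      rw [Finset.mem_filter_univ] at hu
      exact h1 u hu
    · intro u hu
      rw [Finset.mem_filter_univ] at hu
      exact h2 u (hV2 u hu)
end

section
/- Let Γ be a connected bipartite (δ_1,δ_2)-semiregular graph on n = n_1 + n_2 vertices with d+1 distinct eigenvalues, and suppose that d is odd or n_1 = n_2. Then Γ is distance-biregular if and only if its average excess equals its spectral excess, i.e., k̄_d = p_d(λ_0), where p_d is the highest-degree predistance polynomial. -/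
open Polynomial Finset Matrix

/-- `Γ` (bipartite with stable sets `V₁, V₂`) is distance-biregular: it is
distance-regular around each vertex, and the intersection numbers
`c_i(u,v) = |Γ_{i−1}(u)∩Γ(v)|` and `b_i(u,v) = |Γ_{i+1}(u)∩Γ(v)|` (for `v ∈ Γ_i(u)`)
depend only on `i` and on the stable set containing `u`. -/
def IsDistBiregularOn {V : Type*} [Fintype V] [DecidableEq V] (G : SimpleGraph V)
    [DecidableRel G.Adj] (V1 V2 : Finset V) : Prop :=
  ∃ c1 b1 c2 b2 : ℕ → ℕ,
    (∀ u ∈ V1, ∀ v : V,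
      (sphere G u (G.dist u v - 1) ∩ G.neighborFinset v).card = c1 (G.dist u v) ∧
      (sphere G u (G.dist u v + 1) ∩ G.neighborFinset v).card = b1 (G.dist u v)) ∧
    (∀ u ∈ V2, ∀ v : V,
      (sphere G u (G.dist u v - 1) ∩ G.neighborFinset v).card = c2 (G.dist u v) ∧
      (sphere G u (G.dist u v + 1) ∩ G.neighborFinset v).card = b2 (G.dist u v))

lemma sum_entries_mul_entries {V : Type*} [Fintype V] {M N : Matrix V V ℝ} (hN : N.IsSymm) :
    ∑ u, ∑ v, M u v * N u v = (M * N).trace := by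
  simp only [Matrix.trace, Matrix.diag_apply, Matrix.mul_apply]
  exact Finset.sum_congr rfl fun u _ ↦ Finset.sum_congr rfl fun v _ ↦ by rw [hN.apply]

lemma eq_zero_of_isSymm_of_trace_mul_self {V : Type*} [Fintype V] {M : Matrix V V ℝ} (hM : M.IsSymm)
    (h : (M * M).trace = 0) : M = 0 := by
  have := Matrix.trace_conjTranspose_mul_self_eq_zero_iff (A := M)
  rw [Matrix.conjTranspose_eq_transpose_of_trivial, hM.eq] at this
  exact this.mp h

lemma mul_aeval_comm {V : Type*} [Fintype V] [DecidableEq V] (A : Matrix V V ℝ) (f : ℝ[X]) :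
    A * aeval A f = aeval A f * A := by
  simpa using congrArg (aeval A) (X_mul (p := f))

lemma aeval_mul_of_mul_eq_smul {V : Type*} [Fintype V] [DecidableEq V] {A M : Matrix V V ℝ}
    {μ : ℝ} (h : A * M = μ • M) (f : ℝ[X]) : aeval A f * M = f.eval μ • M := by
  induction f using Polynomial.induction_on' with
  | add f g hf hg => simp [add_mul, hf, hg, add_smul]
  | monomial k a =>
    have hpow : A ^ k * M = μ ^ k • M := by
      induction k with
      | zero => simp
      | succ k ih => rw [pow_succ, mul_assoc, h, Matrix.mul_smul, ih, smul_smul, pow_succ']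
    rw [aeval_monomial, mul_assoc, hpow, ← Algebra.smul_def, smul_smul, eval_monomial]

section PolynomialsInAMatrix

variable {V : Type*} [Fintype V] [DecidableEq V]

/-- The matrices `E 0, …, E d` resolve the identity into eigenspaces of `A` for the distinct
eigenvalues `lam 0, …, lam d`. -/
structure IsSpectralResolution (A : Matrix V V ℝ) (d : ℕ) (lam : ℕ → ℝ)
    (E : ℕ → Matrix V V ℝ) : Prop where
  injOn : Set.InjOn lam (Finset.range (d + 1) : Set ℕ)
  sum_eq_one : ∑ i ∈ Finset.range (d + 1), E i = 1
  mul_eq_smul : ∀ i ≤ d, A * E i = lam i • E i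
  ne_zero : ∀ i ≤ d, E i ≠ 0

namespace IsSpectralResolution

variable {A : Matrix V V ℝ} {d : ℕ} {lam : ℕ → ℝ} {E : ℕ → Matrix V V ℝ}

lemma aeval_mul (h : IsSpectralResolution A d lam E) (f : ℝ[X]) {i : ℕ} (hi : i ≤ d) :
    aeval A f * E i = f.eval (lam i) • E i :=
  aeval_mul_of_mul_eq_smul (h.mul_eq_smul i hi) f

lemma aeval_eq_sum (h : IsSpectralResolution A d lam E) (f : ℝ[X]) :
    aeval A f = ∑ i ∈ Finset.range (d + 1), f.eval (lam i) • E i := by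
  rw [← mul_one (aeval A f), ← h.sum_eq_one, Finset.mul_sum]
  exact Finset.sum_congr rfl fun i hi ↦ h.aeval_mul f (Nat.lt_succ_iff.mp (Finset.mem_range.mp hi))

lemma eq_aeval_basis (h : IsSpectralResolution A d lam E) {i : ℕ} (hi : i ≤ d) :
    E i = aeval A (Lagrange.basis (Finset.range (d + 1)) lam i) := by
  have hi' : i ∈ Finset.range (d + 1) := Finset.mem_range.mpr (Nat.lt_succ_of_le hi)
  rw [h.aeval_eq_sum, Finset.sum_eq_single_of_mem i hi', Lagrange.eval_basis_self h.injOn hi',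
    one_smul]
  intro j hj hji
  rw [Lagrange.eval_basis_of_ne hji.symm hj, zero_smul]

lemma exists_degree_lt_aeval_eq (h : IsSpectralResolution A d lam E) (f : ℝ[X]) :
    ∃ g : ℝ[X], g.degree < (d + 1 : ℕ) ∧ aeval A g = aeval A f := by
  refine ⟨Lagrange.interpolate (Finset.range (d + 1)) lam fun i ↦ f.eval (lam i), ?_, ?_⟩
  · simpa using Lagrange.degree_interpolate_lt (fun i ↦ f.eval (lam i)) h.injOn
  · rw [h.aeval_eq_sum, h.aeval_eq_sum]
    refine Finset.sum_congr rfl fun i hi ↦ ?_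
    rw [Lagrange.eval_interpolate_at_node _ h.injOn hi]

lemma eq_zero_of_aeval_eq_zero (h : IsSpectralResolution A d lam E) {f : ℝ[X]}
    (hdeg : f.degree < (d + 1 : ℕ)) (hf : aeval A f = 0) : f = 0 := by
  refine Polynomial.eq_zero_of_degree_lt_of_eval_index_eq_zero _ h.injOn (by simpa using hdeg) ?_
  intro i hi
  have hi' : i ≤ d := Nat.lt_succ_iff.mp (Finset.mem_range.mp hi)
  have := h.aeval_mul f hi'
  rw [hf, zero_mul, eq_comm, smul_eq_zero] at this
  exact this.resolve_right (h.ne_zero i hi')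

lemma exists_eq_of_eigenvector (h : IsSpectralResolution A d lam E) {μ : ℝ} {M : Matrix V V ℝ}
    (hM : M ≠ 0) (hAM : A * M = μ • M) : ∃ i ≤ d, lam i = μ := by
  by_contra! hne
  refine hM ?_
  rw [← one_mul M, ← h.sum_eq_one, Finset.sum_mul]
  refine Finset.sum_eq_zero fun i hi ↦ ?_
  have hi' : i ≤ d := Nat.lt_succ_iff.mp (Finset.mem_range.mp hi)
  have hcomm : A * E i = E i * A := by
    rw [h.eq_aeval_basis hi']
    exact mul_aeval_comm A _
  have : lam i • (E i * M) = μ • (E i * M) := by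
    rw [← Matrix.smul_mul, ← h.mul_eq_smul i hi', hcomm, mul_assoc, hAM, Matrix.mul_smul]
  rw [← sub_eq_zero, ← sub_smul, smul_eq_zero] at this
  exact this.resolve_left (sub_ne_zero.mpr (hne i hi'))

lemma discInner_eq_trace_div (h : IsSpectralResolution A d lam E) (f g : ℝ[X]) :
    discInner (Finset.range (d + 1)) lam (fun i ↦ (E i).trace / (Fintype.card V : ℝ)) f g =
      (aeval A f * aeval A g).trace / (Fintype.card V : ℝ) := by
  rw [← map_mul, h.aeval_eq_sum, Matrix.trace_sum, Finset.sum_div, discInner]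
  refine Finset.sum_congr rfl fun i _ ↦ ?_
  rw [Matrix.trace_smul, eval_mul, smul_eq_mul]
  ring

end IsSpectralResolution

lemma isSymm_aeval {A : Matrix V V ℝ} (hA : A.IsSymm) (f : ℝ[X]) : (aeval A f).IsSymm := by
  induction f using Polynomial.induction_on' with
  | add f g hf hg => simpa using hf.add hg
  | monomial k a =>
    rw [aeval_monomial, ← Algebra.smul_def]
    exact (hA.pow k).smul a

/-- The predistance polynomials of `A`, expressed through traces. -/
structure IsPredistanceSystem (A : Matrix V V ℝ) (d : ℕ) (μ : ℝ) (p : ℕ → ℝ[X]) : Prop where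
  degree_eq : ∀ i ≤ d, (p i).degree = (i : WithBot ℕ)
  trace_mul_of_ne : ∀ i ≤ d, ∀ j ≤ d, i ≠ j → (aeval A (p i) * aeval A (p j)).trace = 0
  trace_mul_self : ∀ i ≤ d,
    (aeval A (p i) * aeval A (p i)).trace = Fintype.card V * (p i).eval μ
  trace_mul_self_ne_zero : ∀ i ≤ d, (aeval A (p i) * aeval A (p i)).trace ≠ 0

namespace IsPredistanceSystem

variable {A : Matrix V V ℝ} {d : ℕ} {μ : ℝ} {p : ℕ → ℝ[X]}

/-- Subtracting a multiple of `p m` lowers the degree. -/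
lemma degree_sub_C_mul_lt (hp : IsPredistanceSystem A d μ p) {m : ℕ} (hm : m ≤ d) {f : ℝ[X]}
    (hf : f.degree < (m + 1 : ℕ)) :
    (f - C (f.coeff m / (p m).coeff m) * p m).degree < (m : ℕ) := by
  have hpm : (p m).coeff m ≠ 0 := coeff_ne_zero_of_eq_degree (hp.degree_eq m hm)
  rw [degree_lt_iff_coeff_zero] at hf ⊢
  intro k hk
  rw [coeff_sub, coeff_C_mul]
  rcases hk.eq_or_lt with rfl | hlt
  · field_simp
    ring
  · rw [hf k hlt, coeff_eq_zero_of_degree_lt (p := p m) (n := k) (by rw [hp.degree_eq m hm]; exact_mod_cast hlt)]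
    simp

lemma exists_eq_sum (hp : IsPredistanceSystem A d μ p) {m : ℕ} (hm : m ≤ d + 1) {f : ℝ[X]}
    (hf : f.degree < (m : ℕ)) : ∃ c : ℕ → ℝ, f = ∑ j ∈ Finset.range m, C (c j) * p j := by
  induction m generalizing f with
  | zero => exact ⟨0, by simpa using hf⟩
  | succ m ih =>
    obtain ⟨c, hc⟩ := ih (by omega) (hp.degree_sub_C_mul_lt (by omega) hf)
    refine ⟨Function.update c m (f.coeff m / (p m).coeff m), ?_⟩
    rw [Finset.sum_range_succ, Function.update_self, ← sub_eq_iff_eq_add, hc]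
    refine Finset.sum_congr rfl fun j hj ↦ ?_
    rw [Function.update_of_ne (Finset.mem_range.mp hj).ne]

lemma trace_mul_eq_zero (hp : IsPredistanceSystem A d μ p) {i : ℕ} (hi : i ≤ d) {f : ℝ[X]}
    (hf : f.degree < (i : ℕ)) : (aeval A (p i) * aeval A f).trace = 0 := by
  obtain ⟨c, rfl⟩ := hp.exists_eq_sum (by omega) hf
  rw [map_sum, Finset.mul_sum, Matrix.trace_sum]
  refine Finset.sum_eq_zero fun j hj ↦ ?_
  have hj' := Finset.mem_range.mp hj
  rw [map_mul, aeval_C, ← Algebra.smul_def, Matrix.mul_smul, Matrix.trace_smul,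
    hp.trace_mul_of_ne i hi j (by omega) (by omega), smul_zero]

/-- Fourier expansion in the predistance polynomials. -/
lemma exists_fourier {lam : ℕ → ℝ} {E : ℕ → Matrix V V ℝ} (hp : IsPredistanceSystem A d μ p)
    (hE : IsSpectralResolution A d lam E) (f : ℝ[X]) :
    ∃ c : ℕ → ℝ, aeval A f = ∑ j ∈ Finset.range (d + 1), c j • aeval A (p j) ∧
      ∀ j ≤ d, (aeval A f * aeval A (p j)).trace =
        c j * (aeval A (p j) * aeval A (p j)).trace := by
  obtain ⟨g, hg, hgf⟩ := hE.exists_degree_lt_aeval_eq f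
  obtain ⟨c, hc⟩ := hp.exists_eq_sum le_rfl hg
  have hsum : aeval A f = ∑ j ∈ Finset.range (d + 1), c j • aeval A (p j) := by
    rw [← hgf, hc, map_sum]
    refine Finset.sum_congr rfl fun j _ ↦ ?_
    rw [map_mul, aeval_C, ← Algebra.smul_def]
  refine ⟨c, hsum, fun j hj ↦ ?_⟩
  rw [hsum, Finset.sum_mul, Matrix.trace_sum, Finset.sum_eq_single_of_mem j (by simp; omega)]
  · rw [Matrix.smul_mul, Matrix.trace_smul, smul_eq_mul]
  · intro i hi hij
    rw [Matrix.smul_mul, Matrix.trace_smul,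
      hp.trace_mul_of_ne i (Nat.lt_succ_iff.mp (Finset.mem_range.mp hi)) j hj hij, smul_zero]

lemma trace_mul_X_mul_ne_zero (hp : IsPredistanceSystem A d μ p) {i : ℕ} (hi : i + 1 ≤ d) :
    (aeval A (p (i + 1)) * aeval A (X * p i)).trace ≠ 0 := by
  have hXdeg : (X * p i).degree = ((i + 1 : ℕ) : WithBot ℕ) := by
    rw [degree_mul, degree_X, hp.degree_eq i (by omega)]
    push_cast
    ring
  have hcoeff : (X * p i).coeff (i + 1) ≠ 0 := coeff_ne_zero_of_eq_degree hXdeg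
  have hpcoeff : (p (i + 1)).coeff (i + 1) ≠ 0 := coeff_ne_zero_of_eq_degree (hp.degree_eq _ hi)
  have hlow := hp.trace_mul_eq_zero hi
    (hp.degree_sub_C_mul_lt hi (f := X * p i) (by rw [hXdeg]; exact_mod_cast Nat.lt_succ_self _))
  rw [map_sub, mul_sub, Matrix.trace_sub, sub_eq_zero] at hlow
  rw [hlow, map_mul, aeval_C, ← Algebra.smul_def, Matrix.mul_smul, Matrix.trace_smul, smul_eq_mul]
  exact mul_ne_zero (div_ne_zero hcoeff hpcoeff) (hp.trace_mul_self_ne_zero _ hi)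

end IsPredistanceSystem

end PolynomialsInAMatrix

lemma adjMatrix_mul_ones {V : Type*} [Fintype V] {G : SimpleGraph V} [DecidableRel G.Adj]
    {δ : ℕ} (hreg : G.IsRegularOfDegree δ) :
    G.adjMatrix ℝ * (Matrix.of fun _ _ ↦ 1) = (δ : ℝ) • (Matrix.of fun _ _ ↦ (1 : ℝ)) := by
  ext u v
  simp [SimpleGraph.adjMatrix_mul_apply, hreg.degree_eq u]

/-- The distance-`i` matrix of a graph. -/
noncomputable def distMatrix {V : Type*} (G : SimpleGraph V) (i : ℕ) : Matrix V V ℝ :=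
  Matrix.of fun u v ↦ if G.dist u v = i then 1 else 0

lemma sum_distMatrix_apply {V : Type*} [Fintype V] [DecidableEq V] {G : SimpleGraph V}
    (u : V) (i : ℕ) :
    ∑ v, distMatrix G i u v = ((sphere G u i).card : ℝ) := by
  simp [distMatrix, sphere]

section Graph

variable {V : Type*} [Fintype V] [DecidableEq V] {G : SimpleGraph V} [DecidableRel G.Adj]

lemma adjMatrix_aeval_apply_eq_zero {f : ℝ[X]} {u v : V} (hf : f.degree < (G.dist u v : ℕ)) :
    aeval (G.adjMatrix ℝ) f u v = 0 := by
  rw [aeval_eq_sum_range, Matrix.sum_apply]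
  refine Finset.sum_eq_zero fun k _ ↦ ?_
  rw [Matrix.smul_apply, SimpleGraph.adjMatrix_pow_apply_eq_card_walk]
  rcases lt_or_ge k (G.dist u v) with hk | hk
  · have : IsEmpty {w : G.Walk u v | w.length = k} := by
      refine ⟨fun w ↦ ?_⟩
      have h₁ := G.dist_le w.1
      have h₂ : w.1.length = k := w.2
      omega
    simp
  · rw [coeff_eq_zero_of_degree_lt (hf.trans_le (by exact_mod_cast hk)), zero_smul]

lemma lapMatrix_mul_eq_smul {δ : ℕ} (hreg : G.IsRegularOfDegree δ) {M : Matrix V V ℝ} {μ : ℝ}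
    (hM : G.adjMatrix ℝ * M = μ • M) : G.lapMatrix ℝ * M = (δ - μ) • M := by
  have hdeg : G.degMatrix ℝ = (δ : ℝ) • (1 : Matrix V V ℝ) := by
    rw [SimpleGraph.degMatrix, Matrix.smul_one_eq_diagonal]
    congr 1
    ext u
    rw [hreg.degree_eq u]
  rw [SimpleGraph.lapMatrix, hdeg, sub_mul, hM, Matrix.smul_mul, one_mul, sub_smul]

/-- An eigenvalue of a regular graph is at most its degree. -/
lemma le_degree_of_adjMatrix_mul_eq_smul {δ : ℕ} (hreg : G.IsRegularOfDegree δ)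
    {M : Matrix V V ℝ} {μ : ℝ} (hM : G.adjMatrix ℝ * M = μ • M) (hne : M ≠ 0) : μ ≤ δ := by
  obtain ⟨w, v, hwv⟩ : ∃ w v, M w v ≠ 0 := by
    by_contra! h
    exact hne (Matrix.ext h)
  have hcol : G.lapMatrix ℝ *ᵥ (fun u ↦ M u v) = (δ - μ : ℝ) • fun u ↦ M u v := by
    funext u
    exact congrFun (congrFun (lapMatrix_mul_eq_smul hreg hM) u) v
  have hpos := (G.posSemidef_lapMatrix (R := ℝ)).dotProduct_mulVec_nonneg fun u ↦ M u v
  rw [hcol, dotProduct_smul, star_trivial, smul_eq_mul] at hpos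
  have hsq : 0 < (fun u ↦ M u v) ⬝ᵥ fun u ↦ M u v :=
    Finset.sum_pos' (fun u _ ↦ mul_self_nonneg _) ⟨w, Finset.mem_univ _, mul_self_pos.mpr hwv⟩
  nlinarith [nonneg_of_mul_nonneg_left hpos hsq]

lemma apply_eq_of_adjMatrix_mul_eq_degree_smul (hconn : G.Connected) {δ : ℕ}
    (hreg : G.IsRegularOfDegree δ) {M : Matrix V V ℝ} (hM : G.adjMatrix ℝ * M = (δ : ℝ) • M)
    (u w v : V) : M u v = M w v := by
  have hcol : G.lapMatrix ℝ *ᵥ (fun u ↦ M u v) = 0 := by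
    funext u
    have := congrFun (congrFun (lapMatrix_mul_eq_smul hreg hM) u) v
    rw [sub_self, zero_smul] at this
    exact this
  exact (G.lapMatrix_mulVec_eq_zero_iff_forall_reachable.mp hcol) u w (hconn.preconnected u w)

variable {d : ℕ} {lam : ℕ → ℝ} {E : ℕ → Matrix V V ℝ} {p : ℕ → ℝ[X]} {δ : ℕ}

lemma lam_zero_eq_degree (hconn : G.Connected) (hreg : G.IsRegularOfDegree δ)
    (hE : IsSpectralResolution (G.adjMatrix ℝ) d lam E) (hlam : ∀ i ≤ d, lam i ≤ lam 0) :
    lam 0 = δ := by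
  refine (le_degree_of_adjMatrix_mul_eq_smul hreg (hE.mul_eq_smul 0 (Nat.zero_le _))
    (hE.ne_zero 0 (Nat.zero_le _))).antisymm ?_
  obtain ⟨v⟩ := hconn.nonempty
  have hone : (Matrix.of fun _ _ ↦ (1 : ℝ) : Matrix V V ℝ) ≠ 0 := fun h ↦
    one_ne_zero (congrFun (congrFun h v) v)
  obtain ⟨i, hi, hiδ⟩ := hE.exists_eq_of_eigenvector hone (adjMatrix_mul_ones hreg)
  exact hiδ ▸ hlam i hi

lemma exists_aeval_eq_ones (hconn : G.Connected) (hreg : G.IsRegularOfDegree δ)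
    (hE : IsSpectralResolution (G.adjMatrix ℝ) d lam E) (h0 : lam 0 = δ) :
    ∃ f : ℝ[X], aeval (G.adjMatrix ℝ) f = Matrix.of fun _ _ ↦ 1 := by
  have hE0 := hE.mul_eq_smul 0 (Nat.zero_le _)
  rw [h0] at hE0
  have hsymm : (E 0).IsSymm := by
    rw [hE.eq_aeval_basis (Nat.zero_le _)]
    exact isSymm_aeval (G.isSymm_adjMatrix) _
  have hconst : ∀ u v w z, E 0 u v = E 0 w z := by
    intro u v w z
    rw [apply_eq_of_adjMatrix_mul_eq_degree_smul hconn hreg hE0 u z v, ← hsymm.apply z v,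
      apply_eq_of_adjMatrix_mul_eq_degree_smul hconn hreg hE0 v w z]
  obtain ⟨v⟩ := hconn.nonempty
  have hne : E 0 v v ≠ 0 := fun h ↦
    hE.ne_zero 0 (Nat.zero_le _) (Matrix.ext fun w z ↦ (hconst w z v v).trans h)
  refine ⟨C (E 0 v v)⁻¹ * Lagrange.basis (Finset.range (d + 1)) lam 0, ?_⟩
  rw [map_mul, aeval_C, ← Algebra.smul_def, ← hE.eq_aeval_basis (Nat.zero_le _)]
  ext w z
  rw [Matrix.smul_apply, hconst w z v v, smul_eq_mul, inv_mul_cancel₀ hne, Matrix.of_apply]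

/-- The Hoffman polynomial is the sum of the predistance polynomials. -/
lemma sum_aeval_eq_ones (hconn : G.Connected) (hreg : G.IsRegularOfDegree δ)
    (hE : IsSpectralResolution (G.adjMatrix ℝ) d lam E)
    (hp : IsPredistanceSystem (G.adjMatrix ℝ) d (lam 0) p) (h0 : lam 0 = δ) :
    ∑ j ∈ Finset.range (d + 1), aeval (G.adjMatrix ℝ) (p j) = Matrix.of fun _ _ ↦ 1 := by
  obtain ⟨f, hf⟩ := exists_aeval_eq_ones hconn hreg hE h0
  obtain ⟨c, hc, hcp⟩ := hp.exists_fourier hE f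
  rw [← hf, hc]
  refine Finset.sum_congr rfl fun j hj ↦ ?_
  have hj' : j ≤ d := Nat.lt_succ_iff.mp (Finset.mem_range.mp hj)
  have htr := hcp j hj'
  rw [Matrix.trace_mul_comm, hf, aeval_mul_of_mul_eq_smul (adjMatrix_mul_ones hreg), ← h0,
    Matrix.trace_smul] at htr
  have hone : (Matrix.of fun _ _ ↦ (1 : ℝ) : Matrix V V ℝ).trace = Fintype.card V := by
    simp [Matrix.trace]
  rw [hone, smul_eq_mul, mul_comm, ← hp.trace_mul_self j hj'] at htr
  rw [← mul_right_cancel₀ (hp.trace_mul_self_ne_zero j hj') ((one_mul _).trans htr), one_smul]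

lemma dist_le_of_sum_aeval_eq_ones (hp : IsPredistanceSystem (G.adjMatrix ℝ) d (lam 0) p)
    (hJ : ∑ j ∈ Finset.range (d + 1), aeval (G.adjMatrix ℝ) (p j) = Matrix.of fun _ _ ↦ 1)
    (u v : V) : G.dist u v ≤ d := by
  by_contra! h
  have := congrFun (congrFun hJ u) v
  rw [Matrix.sum_apply, Finset.sum_eq_zero] at this
  · exact zero_ne_one this
  · intro j hj
    have hj' : j < d + 1 := Finset.mem_range.mp hj
    refine adjMatrix_aeval_apply_eq_zero ?_
    rw [hp.degree_eq j (by omega)]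
    exact_mod_cast (by omega : j < G.dist u v)

lemma distMatrix_mul_adjMatrix_apply (i : ℕ) (u v : V) :
    (distMatrix G i * G.adjMatrix ℝ) u v =
      ((sphere G u i ∩ G.neighborFinset v).card : ℝ) := by
  rw [SimpleGraph.mul_adjMatrix_apply]
  simp only [distMatrix, Matrix.of_apply, Finset.sum_boole]
  congr 2
  ext w
  simp [sphere, and_comm]

lemma sum_aeval_mul_aeval_eq_trace (f g : ℝ[X]) :
    ∑ u, ∑ v, aeval (G.adjMatrix ℝ) f u v * aeval (G.adjMatrix ℝ) g u v =
      (aeval (G.adjMatrix ℝ) f * aeval (G.adjMatrix ℝ) g).trace :=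
  sum_entries_mul_entries (isSymm_aeval (G.isSymm_adjMatrix) g)

/-- If the average excess equals the spectral excess, the top predistance polynomial is a
distance polynomial. -/
lemma aeval_top_eq_distMatrix
    (hp : IsPredistanceSystem (G.adjMatrix ℝ) d (lam 0) p)
    (hJ : ∑ j ∈ Finset.range (d + 1), aeval (G.adjMatrix ℝ) (p j) = Matrix.of fun _ _ ↦ 1)
    (h : ∑ u, ((sphere G u d).card : ℝ) = Fintype.card V * (p d).eval (lam 0)) :
    aeval (G.adjMatrix ℝ) (p d) = distMatrix G d := by
  have hentry : ∀ u v, distMatrix G d u v * aeval (G.adjMatrix ℝ) (p d) u v =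
      distMatrix G d u v := by
    intro u v
    by_cases huv : G.dist u v = d
    · have := congrFun (congrFun hJ u) v
      rw [Matrix.sum_apply, Finset.sum_eq_single_of_mem d (by simp)] at this
      · rw [this, Matrix.of_apply, mul_one]
      · intro j hj hjd
        have hj' : j < d + 1 := Finset.mem_range.mp hj
        refine adjMatrix_aeval_apply_eq_zero ?_
        rw [hp.degree_eq j (by omega)]
        exact_mod_cast (by omega : j < G.dist u v)
    · simp [distMatrix, huv]
  have hsq : ∀ u v, distMatrix G d u v * distMatrix G d u v = distMatrix G d u v := by
    intro u v
    by_cases huv : G.dist u v = d <;> simp [distMatrix, huv]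
  have hzero : ∑ u, ∑ v, (aeval (G.adjMatrix ℝ) (p d) u v - distMatrix G d u v) ^ 2 = 0 := by
    have hexp : ∀ u v, (aeval (G.adjMatrix ℝ) (p d) u v - distMatrix G d u v) ^ 2 =
        aeval (G.adjMatrix ℝ) (p d) u v * aeval (G.adjMatrix ℝ) (p d) u v -
          distMatrix G d u v := by
      intro u v
      linear_combination -2 * hentry u v + hsq u v
    simp only [hexp, Finset.sum_sub_distrib, sum_distMatrix_apply]
    rw [sum_aeval_mul_aeval_eq_trace, hp.trace_mul_self d le_rfl, h, sub_self]
  ext u v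
  rw [Finset.sum_eq_zero_iff_of_nonneg fun u _ ↦ Finset.sum_nonneg fun v _ ↦ sq_nonneg _] at hzero
  have hu := hzero u (Finset.mem_univ _)
  rw [Finset.sum_eq_zero_iff_of_nonneg fun v _ ↦ sq_nonneg _] at hu
  exact sub_eq_zero.mp (pow_eq_zero_iff two_ne_zero |>.mp (hu v (Finset.mem_univ _)))

/-- The distance polynomial property descends from the top predistance polynomial to all of
them. -/
lemma aeval_eq_distMatrix (hE : IsSpectralResolution (G.adjMatrix ℝ) d lam E)
    (hp : IsPredistanceSystem (G.adjMatrix ℝ) d (lam 0) p)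
    (hJ : ∑ j ∈ Finset.range (d + 1), aeval (G.adjMatrix ℝ) (p j) = Matrix.of fun _ _ ↦ 1)
    (htop : aeval (G.adjMatrix ℝ) (p d) = distMatrix G d) {i : ℕ} (hi : i ≤ d) :
    aeval (G.adjMatrix ℝ) (p i) = distMatrix G i := by
  suffices H : ∀ k i, i ≤ d → d ≤ i + k → aeval (G.adjMatrix ℝ) (p i) = distMatrix G i from
    H d i hi (by omega)
  intro k
  induction k with
  | zero =>
    intro i hi hdi
    obtain rfl : i = d := by omega
    exact htop
  | succ k ih =>
    intro i hi hdi
    rcases hdi.lt_or_eq with hlt | heq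
    · exact ih i hi (by omega)
    rcases hi.eq_or_lt with rfl | hid
    · exact htop
    have habove : ∀ j, i < j → j ≤ d → aeval (G.adjMatrix ℝ) (p j) = distMatrix G j :=
      fun j hij hj ↦ ih j hj (by omega)
    obtain ⟨c, hc, hcp⟩ := hp.exists_fourier hE (p (i + 1) * X)
    have hflip : ∀ j, (aeval (G.adjMatrix ℝ) (p (i + 1) * X) * aeval (G.adjMatrix ℝ) (p j)).trace =
        (aeval (G.adjMatrix ℝ) (p (i + 1)) * aeval (G.adjMatrix ℝ) (X * p j)).trace := fun j ↦ by
      simp only [map_mul, mul_assoc]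
    have hci : c i ≠ 0 := by
      intro hci
      have := hcp i hi
      rw [hflip, hci, zero_mul] at this
      exact hp.trace_mul_X_mul_ne_zero (by omega) this
    have hcj : ∀ j < i, c j = 0 := by
      intro j hj
      have := hcp j (by omega)
      rw [hflip, hp.trace_mul_eq_zero (by omega), eq_comm, mul_eq_zero] at this
      · exact this.resolve_right (hp.trace_mul_self_ne_zero j (by omega))
      · rw [degree_mul, degree_X, hp.degree_eq j (by omega)]
        exact_mod_cast (by omega : 1 + j < i + 1)
    ext u v
    rcases lt_trichotomy (G.dist u v) i with hdist | hdist | hdist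
    · have hleft : aeval (G.adjMatrix ℝ) (p (i + 1) * X) u v = 0 := by
        rw [map_mul, aeval_X, habove (i + 1) (by omega) (by omega),
          SimpleGraph.mul_adjMatrix_apply]
        refine Finset.sum_eq_zero fun w hw ↦ ?_
        have hadj : G.Adj v w := (G.mem_neighborFinset v w).mp hw
        have := hadj.diff_dist_adj (u := u)
        exact if_neg (by omega)
      rw [hc, Matrix.sum_apply, Finset.sum_eq_single_of_mem i (by simp; omega)] at hleft
      · rw [Matrix.smul_apply, smul_eq_zero] at hleft
        rw [hleft.resolve_left hci]
        exact (if_neg (by omega)).symm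
      · intro j hj hji
        have hj' : j < d + 1 := Finset.mem_range.mp hj
        rcases lt_or_gt_of_ne hji with hlt | hgt
        · rw [hcj j hlt, zero_smul, Matrix.zero_apply]
        · rw [Matrix.smul_apply, habove j hgt (by omega)]
          simp only [distMatrix, Matrix.of_apply]
          rw [if_neg (by omega), smul_zero]
    · have := congrFun (congrFun hJ u) v
      rw [Matrix.sum_apply, Finset.sum_eq_single_of_mem i (by simp; omega)] at this
      · rw [this]
        simp [distMatrix, hdist]
      · intro j hj hji
        have hj' : j < d + 1 := Finset.mem_range.mp hj
        rcases lt_or_gt_of_ne hji with hlt | hgt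
        · refine adjMatrix_aeval_apply_eq_zero ?_
          rw [hp.degree_eq j (by omega)]
          exact_mod_cast (by omega : j < G.dist u v)
        · rw [habove j hgt (by omega)]
          exact if_neg (by omega)
    · rw [adjMatrix_aeval_apply_eq_zero]
      · exact (if_neg (by omega)).symm
      · rw [hp.degree_eq i hi]
        exact_mod_cast hdist

/-- In a graph whose distance matrices are the predistance polynomials of the adjacency matrix,
the intersection numbers depend only on the distance. -/
lemma exists_card_sphere_inter_eq (hE : IsSpectralResolution (G.adjMatrix ℝ) d lam E)
    (hp : IsPredistanceSystem (G.adjMatrix ℝ) d (lam 0) p)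
    (hdist : ∀ u v, G.dist u v ≤ d)
    (hA : ∀ i ≤ d, aeval (G.adjMatrix ℝ) (p i) = distMatrix G i) (i : ℕ) :
    ∃ a : ℕ → ℕ, ∀ u v, (sphere G u i ∩ G.neighborFinset v).card = a (G.dist u v) := by
  rcases le_or_gt i d with hi | hi
  · obtain ⟨c, hc, -⟩ := hp.exists_fourier hE (p i * X)
    refine ⟨fun m ↦ ⌊c m⌋₊, fun u v ↦ ?_⟩
    have hcard := distMatrix_mul_adjMatrix_apply (G := G) i u v
    rw [← hA i hi] at hcard
    rw [map_mul, aeval_X] at hc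
    rw [hc, Matrix.sum_apply, Finset.sum_eq_single_of_mem (G.dist u v)
      (by simpa [Nat.lt_succ_iff] using hdist u v)] at hcard
    · rw [Matrix.smul_apply, hA _ (hdist u v)] at hcard
      simp only [distMatrix, Matrix.of_apply, if_true, smul_eq_mul, mul_one] at hcard
      simp only [hcard, Nat.floor_natCast]
    · intro j hj hne
      rw [Matrix.smul_apply, hA j (Nat.lt_succ_iff.mp (Finset.mem_range.mp hj))]
      simp [distMatrix, hne.symm]
  · refine ⟨0, fun u v ↦ ?_⟩
    rw [Pi.zero_apply, Finset.card_eq_zero, Finset.eq_empty_iff_forall_notMem]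
    intro w hw
    have : G.dist u w = i := by simpa [sphere] using (Finset.mem_inter.mp hw).1
    have := hdist u w
    omega

end Graph

section Bipartite

variable {V : Type*} [Fintype V] [DecidableEq V] {G : SimpleGraph V} [DecidableRel G.Adj]
  {s : V → ℝ}

lemma diagonal_mul_adjMatrix (hs : ∀ u v, G.Adj u v → s v = -s u) :
    diagonal s * G.adjMatrix ℝ = -(G.adjMatrix ℝ * diagonal s) := by
  ext u v
  rw [Matrix.diagonal_mul, Matrix.neg_apply, Matrix.mul_diagonal, SimpleGraph.adjMatrix_apply]
  split_ifs with h
  · rw [hs u v h]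
    ring
  · simp

lemma trace_diagonal_mul_aeval (hs : ∀ u v, G.Adj u v → s v = -s u) (htr : ∑ u, s u = 0)
    (f : ℝ[X]) : (diagonal s * aeval (G.adjMatrix ℝ) f).trace = 0 := by
  rw [← divX_mul_X_add f, map_add, map_mul, aeval_X, aeval_C, mul_add, Matrix.trace_add]
  have hconst : (diagonal s * algebraMap ℝ (Matrix V V ℝ) (f.coeff 0)).trace = 0 := by
    rw [Algebra.algebraMap_eq_smul_one, Matrix.mul_smul, mul_one, Matrix.trace_smul,
      Matrix.trace_diagonal, htr, smul_zero]
  have hself : (diagonal s * (aeval (G.adjMatrix ℝ) f.divX * G.adjMatrix ℝ)).trace =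
      -(diagonal s * (aeval (G.adjMatrix ℝ) f.divX * G.adjMatrix ℝ)).trace := by
    conv_lhs =>
      rw [← mul_aeval_comm, ← mul_assoc, diagonal_mul_adjMatrix hs, neg_mul, Matrix.trace_neg,
        mul_assoc, Matrix.trace_mul_comm, mul_assoc]
  rw [hconst, add_zero]
  linarith

lemma exists_eq_neg {d : ℕ} {lam : ℕ → ℝ} {E : ℕ → Matrix V V ℝ}
    (hE : IsSpectralResolution (G.adjMatrix ℝ) d lam E)
    (hs : ∀ u v, G.Adj u v → s v = -s u) (hs0 : ∀ u, s u ≠ 0) {i : ℕ} (hi : i ≤ d) :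
    ∃ j ≤ d, lam j = -lam i := by
  refine hE.exists_eq_of_eigenvector (M := diagonal s * E i) ?_ ?_
  · intro h
    refine hE.ne_zero i hi (Matrix.ext fun u v ↦ ?_)
    have := congrFun (congrFun h u) v
    rw [Matrix.diagonal_mul, Matrix.zero_apply, mul_eq_zero] at this
    exact this.resolve_left (hs0 u)
  · rw [← mul_assoc, eq_comm, neg_smul, ← Matrix.mul_smul, ← hE.mul_eq_smul i hi, ← mul_assoc,
      diagonal_mul_adjMatrix hs, neg_mul, neg_neg]

/-- A bipartite graph with an even number of distinct eigenvalues has balanced parts. -/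
lemma sum_eq_zero_of_odd {d : ℕ} {lam : ℕ → ℝ} {E : ℕ → Matrix V V ℝ}
    (hE : IsSpectralResolution (G.adjMatrix ℝ) d lam E)
    (hs : ∀ u v, G.Adj u v → s v = -s u) (hs0 : ∀ u, s u ≠ 0) (hd : Odd d) :
    ∑ u, s u = 0 := by
  have hne : ∀ i ≤ d, lam i ≠ 0 := by
    intro i₀ hi₀ hzero
    let S := (Finset.range (d + 1)).image lam
    have hcard : S.card = d + 1 := by
      rw [Finset.card_image_of_injOn hE.injOn, Finset.card_range]
    have hmem : (0 : ℝ) ∈ S := Finset.mem_image.mpr ⟨i₀, by simp; omega, hzero⟩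
    have hneg : ∀ x ∈ S.erase 0, -x ∈ S.erase 0 := by
      intro x hx
      obtain ⟨hx0, hxS⟩ := Finset.mem_erase.mp hx
      obtain ⟨i, hi, rfl⟩ := Finset.mem_image.mp hxS
      obtain ⟨j, hj, hji⟩ := exists_eq_neg hE hs hs0 (Nat.lt_succ_iff.mp (Finset.mem_range.mp hi))
      exact Finset.mem_erase.mpr
        ⟨neg_ne_zero.mpr hx0, Finset.mem_image.mpr ⟨j, by simp; omega, hji⟩⟩
    have hsum : ∑ _x ∈ S.erase 0, (1 : ZMod 2) = 0 :=
      Finset.sum_involution (fun x _ ↦ -x) (fun _ _ ↦ by decide)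
        (fun x hx _ h ↦ (Finset.mem_erase.mp hx).1 (by linarith)) hneg (fun x _ ↦ neg_neg x)
    rw [Finset.sum_const, nsmul_eq_mul, mul_one, Finset.card_erase_of_mem hmem, hcard,
      Nat.add_sub_cancel, ZMod.natCast_eq_zero_iff_even] at hsum
    exact Nat.not_even_iff_odd.mpr hd hsum
  let B := ∑ i ∈ Finset.range (d + 1), (lam i)⁻¹ • E i
  have hAB : G.adjMatrix ℝ * B = 1 := by
    rw [← hE.sum_eq_one, Finset.mul_sum]
    refine Finset.sum_congr rfl fun i hi ↦ ?_
    have hi' : i ≤ d := Nat.lt_succ_iff.mp (Finset.mem_range.mp hi)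
    rw [Matrix.mul_smul, hE.mul_eq_smul i hi', smul_smul, inv_mul_cancel₀ (hne i hi'), one_smul]
  have hself : (diagonal s).trace = -(diagonal s).trace := by
    conv_lhs =>
      rw [← mul_one (diagonal s), ← hAB, ← mul_assoc, diagonal_mul_adjMatrix hs, neg_mul,
        Matrix.trace_neg, mul_assoc, Matrix.trace_mul_comm, mul_assoc, mul_eq_one_comm.mp hAB, mul_one]
  rw [Matrix.trace_diagonal] at hself
  linarith

end Bipartite

section LocalDistanceRegularity

variable {V : Type*} [Fintype V] [DecidableEq V] {G : SimpleGraph V} [DecidableRel G.Adj]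

lemma sphere_inter_neighborFinset_nonempty (hconn : G.Connected) {u v : V} {j : ℕ}
    (h : G.dist u v = j + 1) : (sphere G u j ∩ G.neighborFinset v).Nonempty := by
  obtain ⟨w, hw⟩ := hconn.exists_walk_length_eq_dist v u
  rw [SimpleGraph.dist_comm, h] at hw
  cases w with
  | nil => simp at hw
  | @cons _ x _ hadj w =>
    refine ⟨x, Finset.mem_inter.mpr ⟨?_, (G.mem_neighborFinset v x).mpr hadj⟩⟩
    have h₁ := hadj.diff_dist_adj (u := u)
    have h₂ := G.dist_le w
    rw [SimpleGraph.dist_comm] at h₂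
    rw [SimpleGraph.Walk.length_cons] at hw
    simp only [sphere, Finset.mem_filter, Finset.mem_univ, true_and]
    omega

lemma sum_neighborFinset_ball {δ : ℕ} (hreg : G.IsRegularOfDegree δ) {b c : ℕ → ℕ} {u v : V}
    (hc : (sphere G u (G.dist u v - 1) ∩ G.neighborFinset v).card = c (G.dist u v))
    (hb : (sphere G u (G.dist u v + 1) ∩ G.neighborFinset v).card = b (G.dist u v)) (j : ℕ) :
    ∑ w ∈ G.neighborFinset v, (if G.dist u w < j + 1 then 1 else 0 : ℝ) =
      if G.dist u v < j then (δ : ℝ) else if G.dist u v < j + 1 then δ - b j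
        else if G.dist u v < j + 2 then c (j + 1) else 0 := by
  have hstep : ∀ w ∈ G.neighborFinset v, G.dist u w = G.dist u v ∨
      G.dist u w = G.dist u v + 1 ∨ G.dist u w = G.dist u v - 1 := fun w hw ↦
    ((G.mem_neighborFinset v w).mp hw).diff_dist_adj
  have hdeg : ∑ _w ∈ G.neighborFinset v, (1 : ℝ) = δ := by
    rw [Finset.sum_const, SimpleGraph.card_neighborFinset_eq_degree, hreg.degree_eq v]
    simp
  have hind : ∀ i, ∑ w ∈ G.neighborFinset v, (if G.dist u w = i then 1 else 0 : ℝ) =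
      ((sphere G u i ∩ G.neighborFinset v).card : ℝ) := fun i ↦ by
    rw [← distMatrix_mul_adjMatrix_apply, SimpleGraph.mul_adjMatrix_apply]
    rfl
  split_ifs with h₁ h₂ h₃
  · rw [← hdeg]
    refine Finset.sum_congr rfl fun w hw ↦ if_pos ?_
    have := hstep w hw
    omega
  · obtain rfl : j = G.dist u v := by omega
    rw [← hb, ← hind, ← hdeg, ← Finset.sum_sub_distrib]
    refine Finset.sum_congr rfl fun w hw ↦ ?_
    have := hstep w hw
    by_cases h : G.dist u w = G.dist u v + 1
    · simp [h]
    · rw [if_pos (by omega), if_neg h, sub_zero]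
  · have h : G.dist u v = j + 1 := by omega
    rw [← h, ← hc, ← hind]
    refine Finset.sum_congr rfl fun w hw ↦ ?_
    have := hstep w hw
    congr 1
    rw [eq_iff_iff]
    omega
  · refine Finset.sum_eq_zero fun w hw ↦ if_neg ?_
    have := hstep w hw
    omega

/-- If the intersection numbers around the vertices of `W` depend only on the distance, then the
indicator of the balls around vertices of `W` is a polynomial in the adjacency matrix. -/
lemma exists_aeval_eq_ball (hconn : G.Connected) {δ : ℕ} (hreg : G.IsRegularOfDegree δ)
    {W : Finset V} {b c : ℕ → ℕ}
    (hW : ∀ u ∈ W, ∀ v : V,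
      (sphere G u (G.dist u v - 1) ∩ G.neighborFinset v).card = c (G.dist u v) ∧
      (sphere G u (G.dist u v + 1) ∩ G.neighborFinset v).card = b (G.dist u v)) (j : ℕ) :
    ∃ q : ℝ[X], q.degree < (j : ℕ) ∧ ∀ u ∈ W, ∀ v,
      aeval (G.adjMatrix ℝ) q u v = if G.dist u v < j then 1 else 0 := by
  induction j using Nat.twoStepInduction with
  | zero => exact ⟨0, by simp, by simp⟩
  | one =>
    refine ⟨1, by rw [degree_one]; exact_mod_cast Nat.zero_lt_one, fun u _ v ↦ ?_⟩
    rw [map_one, Matrix.one_apply]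
    simp [hconn.dist_eq_zero_iff]
  | more j ih₁ ih₂ =>
    obtain ⟨q, hq, hqA⟩ := ih₁
    obtain ⟨r, hr, hrA⟩ := ih₂
    rcases eq_or_ne (c (j + 1)) 0 with hc | hc
    · refine ⟨r, hr.trans (by exact_mod_cast Nat.lt_succ_self _), fun u hu v ↦ ?_⟩
      have hne : G.dist u v ≠ j + 1 := by
        intro h
        have h₁ := (hW u hu v).1
        rw [h, hc, Nat.add_sub_cancel] at h₁
        exact (sphere_inter_neighborFinset_nonempty hconn h).ne_empty (Finset.card_eq_zero.mp h₁)
      rw [hrA u hu v]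
      congr 1
      rw [eq_iff_iff]
      omega
    · refine ⟨r + (c (j + 1) : ℝ)⁻¹ •
        (r * X - (δ : ℝ) • q - (δ - b j : ℝ) • (r - q)), ?_, fun u hu v ↦ ?_⟩
      · rw [degree_lt_iff_coeff_zero] at hq hr ⊢
        intro k hk
        obtain ⟨k, rfl⟩ : ∃ k', k = k' + 1 := ⟨k - 1, by omega⟩
        simp only [coeff_add, coeff_sub, coeff_smul, coeff_mul_X]
        rw [hr (k + 1) (by omega), hr k (by omega), hq (k + 1) (by omega)]
        simp
      · have hc' : (c (j + 1) : ℝ) ≠ 0 := Nat.cast_ne_zero.mpr hc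
        have hmul : (aeval (G.adjMatrix ℝ) r * G.adjMatrix ℝ) u v =
            ∑ w ∈ G.neighborFinset v, (if G.dist u w < j + 1 then 1 else 0 : ℝ) := by
          rw [SimpleGraph.mul_adjMatrix_apply]
          exact Finset.sum_congr rfl fun w _ ↦ hrA u hu w
        rw [sum_neighborFinset_ball hreg (hW u hu v).1 (hW u hu v).2] at hmul
        simp only [map_add, map_sub, map_mul, map_smul, aeval_X,
          Matrix.add_apply, Matrix.sub_apply, Matrix.smul_apply, smul_eq_mul, hmul, hqA u hu v,
          hrA u hu v]
        split_ifs <;> first | omega | (field_simp; ring)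

/-- Local distance-regularity on a part `W` that carries the same spectral measure as the whole
graph makes the top predistance polynomial a distance polynomial on `W`. -/
lemma aeval_top_apply_eq (hconn : G.Connected) {δ : ℕ} (hreg : G.IsRegularOfDegree δ)
    {d : ℕ} {lam : ℕ → ℝ} {p : ℕ → ℝ[X]}
    (hp : IsPredistanceSystem (G.adjMatrix ℝ) d (lam 0) p)
    (hJ : ∑ j ∈ Finset.range (d + 1), aeval (G.adjMatrix ℝ) (p j) = Matrix.of fun _ _ ↦ 1)
    {W : Finset V} {b c : ℕ → ℕ}
    (hW : ∀ u ∈ W, ∀ v : V,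
      (sphere G u (G.dist u v - 1) ∩ G.neighborFinset v).card = c (G.dist u v) ∧
      (sphere G u (G.dist u v + 1) ∩ G.neighborFinset v).card = b (G.dist u v))
    (hhalf : ∀ f : ℝ[X], (aeval (G.adjMatrix ℝ) f).trace =
      2 * ∑ u ∈ W, aeval (G.adjMatrix ℝ) f u u) {u : V} (hu : u ∈ W) (v : V) :
    aeval (G.adjMatrix ℝ) (p d) u v = distMatrix G d u v := by
  obtain ⟨q, hq, hqA⟩ := exists_aeval_eq_ball hconn hreg hW d
  let g : ℝ[X] := ∑ j ∈ Finset.range d, p j - q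
  have hg : g.degree < (d : ℕ) := by
    refine (degree_sub_le _ _).trans_lt (max_lt ?_ hq)
    refine mem_degreeLT.mp (Submodule.sum_mem _ fun j hj ↦ mem_degreeLT.mpr ?_)
    have hj' := Finset.mem_range.mp hj
    rw [hp.degree_eq j hj'.le]
    exact_mod_cast hj'
  have hsplit : ∀ x ∈ W, ∀ y, aeval (G.adjMatrix ℝ) (g + p d) x y = distMatrix G d x y := by
    intro x hx y
    have hgp : g + p d = ∑ j ∈ Finset.range (d + 1), p j - q := by
      rw [Finset.sum_range_succ]
      ring
    rw [hgp, map_sub, map_sum, hJ, Matrix.sub_apply, hqA x hx y]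
    have := dist_le_of_sum_aeval_eq_ones hp hJ x y
    simp only [distMatrix, Matrix.of_apply]
    split_ifs <;> first | omega | simp
  have horth : (aeval (G.adjMatrix ℝ) (g + p d) * aeval (G.adjMatrix ℝ) g).trace = 0 := by
    rw [← map_mul, hhalf, map_mul, Finset.sum_eq_zero, mul_zero]
    intro x hx
    rw [Matrix.mul_apply]
    refine Finset.sum_eq_zero fun y _ ↦ ?_
    rw [hsplit x hx y]
    by_cases hxy : G.dist x y = d
    · rw [adjMatrix_aeval_apply_eq_zero, mul_zero]
      rwa [SimpleGraph.dist_comm, hxy]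
    · simp [distMatrix, hxy]
  rw [map_add, add_mul, Matrix.trace_add, hp.trace_mul_eq_zero le_rfl hg, add_zero] at horth
  have hzero := eq_zero_of_isSymm_of_trace_mul_self (isSymm_aeval G.isSymm_adjMatrix g) horth
  rw [← hsplit u hu v, map_add, hzero, zero_add]

end LocalDistanceRegularity

section Parts

variable {V : Type*} [Fintype V] [DecidableEq V] {G : SimpleGraph V} {V1 V2 : Finset V}

/-- The function with value `1` on `V1` and `-1` elsewhere. -/
def partSign {V : Type*} [DecidableEq V] (V1 : Finset V) (u : V) : ℝ :=
  if u ∈ V1 then 1 else -1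

lemma partSign_ne_zero {V : Type*} [DecidableEq V] (V1 : Finset V) (u : V) :
    partSign V1 u ≠ 0 := by
  unfold partSign
  split_ifs <;> norm_num

lemma partSign_eq_neg_of_adj (hcover : V1 ∪ V2 = Finset.univ)
    (hind1 : ∀ u ∈ V1, ∀ v ∈ V1, ¬ G.Adj u v) (hind2 : ∀ u ∈ V2, ∀ v ∈ V2, ¬ G.Adj u v)
    (u v : V) (h : G.Adj u v) : partSign V1 v = -partSign V1 u := by
  have hor : ∀ w, w ∈ V1 ∨ w ∈ V2 := fun w ↦
    Finset.mem_union.mp (hcover ▸ Finset.mem_univ w)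
  unfold partSign
  by_cases hu : u ∈ V1 <;> by_cases hv : v ∈ V1
  · exact absurd h (hind1 u hu v hv)
  · simp [hu, hv]
  · simp [hu, hv]
  · exact absurd h (hind2 u ((hor u).resolve_left hu) v ((hor v).resolve_left hv))

lemma sum_partSign_mul (hcover : V1 ∪ V2 = Finset.univ) (hdisj : Disjoint V1 V2) (x : V → ℝ) :
    ∑ u, partSign V1 u * x u = ∑ u ∈ V1, x u - ∑ u ∈ V2, x u := by
  rw [← hcover, Finset.sum_union hdisj, sub_eq_add_neg, ← Finset.sum_neg_distrib]
  congr 1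
  · exact Finset.sum_congr rfl fun u hu ↦ by simp [partSign, hu]
  · exact Finset.sum_congr rfl fun u hu ↦ by
      simp [partSign, Finset.disjoint_right.mp hdisj hu]

lemma sum_partSign (hcover : V1 ∪ V2 = Finset.univ) (hdisj : Disjoint V1 V2) :
    ∑ u, partSign V1 u = (V1.card : ℝ) - V2.card := by
  simpa using sum_partSign_mul hcover hdisj fun _ ↦ 1

variable [DecidableRel G.Adj]

lemma trace_aeval_eq_two_mul_sum (hcover : V1 ∪ V2 = Finset.univ)
    (hdisj : Disjoint V1 V2) (hind1 : ∀ u ∈ V1, ∀ v ∈ V1, ¬ G.Adj u v)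
    (hind2 : ∀ u ∈ V2, ∀ v ∈ V2, ¬ G.Adj u v) (hcard : V1.card = V2.card) (f : ℝ[X]) :
    (aeval (G.adjMatrix ℝ) f).trace = 2 * ∑ u ∈ V1, aeval (G.adjMatrix ℝ) f u u := by
  have htr := trace_diagonal_mul_aeval (partSign_eq_neg_of_adj hcover hind1 hind2)
    (by rw [sum_partSign hcover hdisj, hcard, sub_self]) f
  simp only [Matrix.trace, Matrix.diag_apply, Matrix.diagonal_mul] at htr ⊢
  rw [sum_partSign_mul hcover hdisj fun u ↦ aeval (G.adjMatrix ℝ) f u u] at htr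
  rw [← hcover, Finset.sum_union hdisj]
  linarith

lemma isRegularOfDegree_of_card_eq [Nonempty V] (hcover : V1 ∪ V2 = Finset.univ)
    (hdisj : Disjoint V1 V2) (hind1 : ∀ u ∈ V1, ∀ v ∈ V1, ¬ G.Adj u v)
    (hind2 : ∀ u ∈ V2, ∀ v ∈ V2, ¬ G.Adj u v) {δ1 δ2 : ℕ}
    (hdeg1 : ∀ u ∈ V1, G.degree u = δ1) (hdeg2 : ∀ v ∈ V2, G.degree v = δ2)
    (hcard : V1.card = V2.card) : G.IsRegularOfDegree δ1 := by
  have hor : ∀ w, w ∈ V1 ∨ w ∈ V2 := fun w ↦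
    Finset.mem_union.mp (hcover ▸ Finset.mem_univ w)
  have hbip : G.IsBipartiteWith (V1 : Set V) V2 := by
    refine ⟨Finset.disjoint_coe.mpr hdisj, fun v w h ↦ ?_⟩
    have h₁ := hor v
    have h₂ := hor w
    have h₃ := fun hv hw ↦ hind1 v hv w hw h
    have h₄ := fun hv hw ↦ hind2 v hv w hw h
    simp only [Finset.mem_coe]
    tauto
  have hsum := SimpleGraph.isBipartiteWith_sum_degrees_eq hbip
  rw [Finset.sum_congr rfl hdeg1, Finset.sum_congr rfl hdeg2, Finset.sum_const, Finset.sum_const,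
    hcard, smul_eq_mul, smul_eq_mul] at hsum
  have hpos : 0 < V2.card := by
    obtain ⟨v⟩ := ‹Nonempty V›
    rcases hor v with h | h
    · exact hcard ▸ Finset.card_pos.mpr ⟨v, h⟩
    · exact Finset.card_pos.mpr ⟨v, h⟩
  have hδ : δ1 = δ2 := Nat.eq_of_mul_eq_mul_left hpos hsum
  intro v
  rcases hor v with h | h
  · exact hdeg1 v h
  · exact hδ ▸ hdeg2 v h

end Parts

/-- Theorem 3.1(a): a connected bipartite `(δ₁,δ₂)`-semiregular graph with `d+1`
distinct eigenvalues, where `d` is odd or `n₁ = n₂`, is distance-biregular if and only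
if its average excess equals its spectral excess: `k̄_d = p_d(λ_0)`. -/
theorem stmt_11 {V : Type*} [Fintype V] [DecidableEq V]
    (G : SimpleGraph V) [DecidableRel G.Adj] (hconn : G.Connected)
    (V1 V2 : Finset V) (hcover : V1 ∪ V2 = Finset.univ) (hdisj : Disjoint V1 V2)
    (hind1 : ∀ u ∈ V1, ∀ v ∈ V1, ¬ G.Adj u v)
    (hind2 : ∀ u ∈ V2, ∀ v ∈ V2, ¬ G.Adj u v)
    (δ1 δ2 : ℕ)
    (hdeg1 : ∀ u ∈ V1, G.degree u = δ1) (hdeg2 : ∀ v ∈ V2, G.degree v = δ2)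
    (d : ℕ) (lam : ℕ → ℝ) (hlam : StrictAntiOn lam (Set.Iic d))
    (E : ℕ → Matrix V V ℝ)
    (hsym : ∀ i ≤ d, (E i).IsSymm)
    (hsum : ∑ i ∈ Finset.range (d + 1), E i = 1)
    (hmul : ∀ i ≤ d, ∀ j ≤ d, E i * E j = if i = j then E i else 0)
    (heig : ∀ i ≤ d, G.adjMatrix ℝ * E i = lam i • E i)
    (hnz : ∀ i ≤ d, E i ≠ 0)
    -- the predistance polynomials, for the weights `m(λ_i)/n`
    (p : ℕ → Polynomial ℝ)
    (hpdeg : ∀ i ≤ d, (p i).degree = (i : WithBot ℕ))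
    (hporth : ∀ i ≤ d, ∀ j ≤ d, i ≠ j →
      discInner (Finset.range (d + 1)) lam
        (fun i => Matrix.trace (E i) / (Fintype.card V : ℝ)) (p i) (p j) = 0)
    (hpnorm : ∀ i ≤ d,
      discInner (Finset.range (d + 1)) lam
          (fun i => Matrix.trace (E i) / (Fintype.card V : ℝ)) (p i) (p i)
        = (p i).eval (lam 0))
    (hcase : Odd d ∨ V1.card = V2.card) :
    IsDistBiregularOn G V1 V2 ↔
      (1 / (Fintype.card V : ℝ)) * ∑ u : V, ((sphere G u d).card : ℝ)
        = (p d).eval (lam 0) := by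
  have hV : (Fintype.card V : ℝ) ≠ 0 := by
    have := hconn.nonempty
    exact Nat.cast_ne_zero.mpr Fintype.card_ne_zero
  have hE : IsSpectralResolution (G.adjMatrix ℝ) d lam E :=
    ⟨fun i hi j hj h ↦ hlam.injOn (Nat.lt_succ_iff.mp (Finset.mem_range.mp hi))
      (Nat.lt_succ_iff.mp (Finset.mem_range.mp hj)) h, hsum, heig, hnz⟩
  have hp : IsPredistanceSystem (G.adjMatrix ℝ) d (lam 0) p := by
    refine ⟨hpdeg, fun i hi j hj hij ↦ ?_, fun i hi ↦ ?_, fun i hi h ↦ ?_⟩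
    · have := hporth i hi j hj hij
      rw [hE.discInner_eq_trace_div, div_eq_zero_iff] at this
      exact this.resolve_right hV
    · have := hpnorm i hi
      rwa [hE.discInner_eq_trace_div, div_eq_iff hV, mul_comm] at this
    · have hzero := eq_zero_of_isSymm_of_trace_mul_self
        (isSymm_aeval G.isSymm_adjMatrix (p i)) h
      have hdeg := hpdeg i hi
      rw [hE.eq_zero_of_aeval_eq_zero
        (by rw [hdeg]; exact_mod_cast Nat.lt_succ_of_le hi) hzero] at hdeg
      simp at hdeg
  have hcard : V1.card = V2.card := by
    refine hcase.elim (fun hd ↦ ?_) id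
    have := sum_eq_zero_of_odd hE (partSign_eq_neg_of_adj hcover hind1 hind2)
      (partSign_ne_zero V1) hd
    rw [sum_partSign hcover hdisj, sub_eq_zero] at this
    exact_mod_cast this
  have hreg : G.IsRegularOfDegree δ1 :=
    have := hconn.nonempty
    isRegularOfDegree_of_card_eq hcover hdisj hind1 hind2 hdeg1 hdeg2 hcard
  have h0 : lam 0 = δ1 := lam_zero_eq_degree hconn hreg hE fun i hi ↦
    hlam.antitoneOn (Set.mem_Iic.mpr (Nat.zero_le _)) (Set.mem_Iic.mpr hi) (Nat.zero_le _)
  have hJ := sum_aeval_eq_ones hconn hreg hE hp h0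
  have hexcess : (1 / (Fintype.card V : ℝ)) * ∑ u : V, ((sphere G u d).card : ℝ)
        = (p d).eval (lam 0) ↔
      ∑ u : V, ((sphere G u d).card : ℝ) = Fintype.card V * (p d).eval (lam 0) := by
    rw [one_div, inv_mul_eq_iff_eq_mul₀ hV]
  rw [hexcess]
  constructor
  · rintro ⟨c1, b1, c2, b2, h1, h2⟩
    have htop : aeval (G.adjMatrix ℝ) (p d) = distMatrix G d := by
      ext u v
      rcases Finset.mem_union.mp (hcover ▸ Finset.mem_univ u) with hu | hu
      · exact aeval_top_apply_eq hconn hreg hp hJ h1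
          (trace_aeval_eq_two_mul_sum hcover hdisj hind1 hind2 hcard) hu v
      · exact aeval_top_apply_eq hconn hreg hp hJ h2
          (trace_aeval_eq_two_mul_sum (Finset.union_comm V1 V2 ▸ hcover) hdisj.symm hind2 hind1
            hcard.symm) hu v
    rw [← hp.trace_mul_self d le_rfl, ← sum_aeval_mul_aeval_eq_trace, htop]
    refine Finset.sum_congr rfl fun u _ ↦ ?_
    rw [← sum_distMatrix_apply]
    refine Finset.sum_congr rfl fun v _ ↦ ?_
    by_cases huv : G.dist u v = d <;> simp [distMatrix, huv]
  · intro h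
    have htop := aeval_top_eq_distMatrix hp hJ h
    choose a ha using exists_card_sphere_inter_eq hE hp (dist_le_of_sum_aeval_eq_ones hp hJ)
      fun i hi ↦ aeval_eq_distMatrix hE hp hJ htop hi
    exact ⟨fun m ↦ a (m - 1) m, fun m ↦ a (m + 1) m, fun m ↦ a (m - 1) m, fun m ↦ a (m + 1) m,
      fun u _ v ↦ ⟨ha _ u v, ha _ u v⟩, fun u _ v ↦ ⟨ha _ u v, ha _ u v⟩⟩
end
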